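/- Let m ≥ 0 be an integer. There is a constant C_m > 0 (one may take C_m = Γ(4m+2)/(2^{4m+4} π (2m+1))) such that for every F ∈ H²(T_{Λ₃}), the restriction R□^m F : Π⁺ → ℂ, z₁ ↦ (□^m F)(z₁, 0, 0), belongs to the weighted Bergman space A²_{4m+1}(Π⁺) and ‖R□^m F‖²_{A²_{4m+1}(Π⁺)} ≤ C_m ‖F‖²_{H²(T_{Λ₃})}. -/

import Mathlib

open MeasureTheory Set
open scoped ENNReal NNReal

noncomputable section

/-- The Lorentz cone `Λ₃ = {y ∈ ℝ³ : y₁ + y₂ > 0, y₁² − y₂² − y₃² > 0}`. -/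
def Lambda3 : Set (Fin 3 → ℝ) :=
  {y | 0 < y 0 + y 1 ∧ 0 < (y 0) ^ 2 - (y 1) ^ 2 - (y 2) ^ 2}

/-- The tube domain `T_{Λ₃} = ℝ³ + iΛ₃ ⊂ ℂ³`. -/
def TLambda3 : Set (Fin 3 → ℂ) :=
  {z | (fun i => (z i).im) ∈ Lambda3}

/-- The determinant function of the Lorentz cone: `Δ(y) = y₁² − y₂² − y₃²`. -/
def DeltaL (y : Fin 3 → ℝ) : ℝ := (y 0) ^ 2 - (y 1) ^ 2 - (y 2) ^ 2

/-- Square of the Hardy space `H²(T_{Λ₃})` norm. -/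
def hardyNormSq (F : (Fin 3 → ℂ) → ℂ) : ℝ≥0∞ :=
  ⨆ y ∈ Lambda3,
    ∫⁻ x : Fin 3 → ℝ, (‖F (fun i => (x i : ℂ) + (y i : ℂ) * Complex.I)‖₊ : ℝ≥0∞) ^ 2

/-- Square of the weighted Bergman space `A²_ν(T_{Λ₃})` norm:
`‖G‖² = ∫_{Λ₃} ∫_{ℝ³} |G(x+iy)|² Δ(y)^{ν−3/2} dx dy`. -/
def bergNormSqTube (ν : ℝ) (G : (Fin 3 → ℂ) → ℂ) : ℝ≥0∞ :=
  ∫⁻ y in Lambda3,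
    (∫⁻ x : Fin 3 → ℝ, (‖G (fun i => (x i : ℂ) + (y i : ℂ) * Complex.I)‖₊ : ℝ≥0∞) ^ 2)
      * ENNReal.ofReal (DeltaL y ^ (ν - 3 / 2))

/-- Partial derivative in the `i`-th complex coordinate. -/
def pd (i : Fin 3) (F : (Fin 3 → ℂ) → ℂ) : (Fin 3 → ℂ) → ℂ :=
  fun z => fderiv ℂ F z (Pi.single i 1)

/-- The box operator `□ = −∂²/∂z₁² + ∂²/∂z₂² + ∂²/∂z₃²` associated to the Lorentz cone. -/
def Box (F : (Fin 3 → ℂ) → ℂ) : (Fin 3 → ℂ) → ℂ :=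
  fun z => - pd 0 (pd 0 F) z + pd 1 (pd 1 F) z + pd 2 (pd 2 F) z

/-- The upper half-plane `Π⁺`. -/
def UHP : Set ℂ := {z : ℂ | 0 < z.im}

/-- The weighted measure `dV_α(x+iy) = y^α dx dy` on the upper half-plane. -/
def Vm (α : ℝ) : Measure ℂ :=
  (volume.restrict UHP).withDensity fun z => ENNReal.ofReal (z.im ^ α)

/-- Square of the weighted Bergman space `A²_α(Π⁺)` norm:
`‖G‖² = ∫_{Π⁺} |G(x+iy)|² y^α dx dy`. -/
def bergNormSqUHP (α : ℝ) (G : ℂ → ℂ) : ℝ≥0∞ :=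
  ∫⁻ z, (‖G z‖₊ : ℝ≥0∞) ^ 2 ∂(Vm α)

/-!
By the Paley–Wiener argument, `F` is the Fourier–Laplace transform of a density `g` on `ℝ³` with
`‖g‖₂ ≤ ‖F‖`, supported in the dual cone, which is the closed forward light cone `|p| ≤ t` of points
`(t, p) ∈ ℝ × ℝ²`. In frequency, `□^m` multiplies `g` by `(4π²(t² - |p|²))^m`, and restriction to
the axis `(z₁, 0, 0)` integrates out `p`. So `R□^m F` is a one-dimensional Laplace transform on
`t > 0`, and by Plancherel on horizontal lines and a Gamma integral in the height, its Bergman norm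
is at most a weighted `L²` norm in `t`. Cauchy–Schwarz on the disc `|p| ≤ t` bounds that norm by
`‖g‖₂`, the constant `C_m` coming from the integral of `(t² - |p|²)^(2m)` over the disc.
-/

section Fourier

open FourierTransform SchwartzMap

theorem lintegral_enorm_sq_eq_eLpNorm_sq {α G : Type*} [MeasurableSpace α] {μ : Measure α}
    [NormedAddCommGroup G] (f : α → G) : ∫⁻ x, ‖f x‖ₑ ^ 2 ∂μ = eLpNorm f 2 μ ^ 2 := by
  simpa using (eLpNorm_nnreal_pow_eq_lintegral (f := f) (μ := μ) (p := 2) two_ne_zero).symm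

theorem memLp_two_iff_lintegral_enorm_sq_lt_top {α G : Type*} [MeasurableSpace α]
    {μ : Measure α} [NormedAddCommGroup G] {f : α → G} (hf : AEStronglyMeasurable f μ) :
    MemLp f 2 μ ↔ ∫⁻ x, ‖f x‖ₑ ^ 2 ∂μ < ⊤ := by
  rw [lintegral_enorm_sq_eq_eLpNorm_sq, MemLp, and_iff_right hf]
  simp

variable {V G : Type*} [NormedAddCommGroup V] [InnerProductSpace ℝ V] [FiniteDimensional ℝ V]
  [MeasurableSpace V] [BorelSpace V] [NormedAddCommGroup G] [InnerProductSpace ℂ G]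

theorem continuous_fourierInv_of_integrable {f : V → G} (hf : Integrable f) :
    Continuous (𝓕⁻ f) :=
  VectorFourier.fourierIntegral_continuous Real.continuous_fourierChar
    (by exact (innerSL ℝ (E := V)).continuous₂.neg) hf

variable [CompleteSpace G]

theorem integral_smul_fourierInv_Lp (f : Lp (α := V) G 2 volume) (ψ : 𝓢(V, ℂ)) :
    ∫ ξ, ψ ξ • (𝓕⁻ f : Lp (α := V) G 2 volume) ξ = ∫ x, 𝓕⁻ (ψ : V → ℂ) x • f x := by
  have h := congrArg (fun T => T ψ) (Lp.fourierInv_toTemperedDistribution_eq f)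
  simp only [TemperedDistribution.fourierInv_apply, Lp.toTemperedDistribution_apply] at h
  rw [← h, SchwartzMap.fourierInv_coe]

theorem integral_smul_fourierInv {φ : V → ℂ} {f : V → G} (hφ : Integrable φ)
    (hf : Integrable f) : ∫ ξ, φ ξ • 𝓕⁻ f ξ = ∫ x, 𝓕⁻ φ x • f x := by
  have h := VectorFourier.integral_fourierIntegral_smul_eq_flip (L := -innerₗ V) (μ := volume)
    (ν := volume) Real.continuous_fourierChar
    (by exact (innerSL ℝ (E := V)).continuous₂.neg) hφ hf
  have hflip : (-innerₗ V).flip = -innerₗ V := by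
    ext x y
    simp [real_inner_comm]
  rw [hflip] at h
  exact h.symm

theorem coeFn_fourierInv_toLp {f : V → G} (h1 : Integrable f) (h2 : MemLp f 2) :
    (𝓕⁻ (h2.toLp f) : Lp (α := V) G 2 volume) =ᵐ[volume] 𝓕⁻ f := by
  refine ae_eq_of_integral_contDiff_smul_eq ((Lp.memLp _).locallyIntegrable (by norm_num))
    (continuous_fourierInv_of_integrable h1).locallyIntegrable fun φ hφ hφc => ?_
  have hφc' : HasCompactSupport (Complex.ofRealCLM ∘ φ) := hφc.comp_left rfl
  let ψ : 𝓢(V, ℂ) := hφc'.toSchwartzMap (by fun_prop)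
  calc ∫ ξ, φ ξ • (𝓕⁻ (h2.toLp f) : Lp (α := V) G 2 volume) ξ
      = ∫ ξ, ψ ξ • (𝓕⁻ (h2.toLp f) : Lp (α := V) G 2 volume) ξ := rfl
    _ = ∫ x, 𝓕⁻ (ψ : V → ℂ) x • h2.toLp f x := integral_smul_fourierInv_Lp _ ψ
    _ = ∫ x, 𝓕⁻ (ψ : V → ℂ) x • f x := integral_congr_ae <| by
        filter_upwards [h2.coeFn_toLp] with x hx
        rw [hx]
    _ = ∫ ξ, ψ ξ • 𝓕⁻ f ξ := (integral_smul_fourierInv ψ.integrable h1).symm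
    _ = ∫ ξ, φ ξ • 𝓕⁻ f ξ := rfl

theorem eLpNorm_fourier_Lp (f : Lp (α := V) G 2 volume) :
    eLpNorm (𝓕 f : Lp (α := V) G 2 volume) 2 volume = eLpNorm f 2 volume := by
  have h := Lp.norm_fourier_eq f
  rwa [Lp.norm_def, Lp.norm_def,
    ENNReal.toReal_eq_toReal_iff' (Lp.eLpNorm_ne_top _) (Lp.eLpNorm_ne_top _)] at h

/-- The `L²` Fourier transform of a square-integrable function. -/
def fourierL2 {f : V → G} (hf : MemLp f 2) : Lp (α := V) G 2 volume := 𝓕 (hf.toLp f)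

theorem integral_smul_fourierL2 {f : V → G} (hf : MemLp f 2) (ψ : 𝓢(V, ℂ)) :
    ∫ ξ, ψ ξ • fourierL2 hf ξ = ∫ x, 𝓕 (ψ : V → ℂ) x • f x := by
  have h := congrArg (fun T => T ψ) (Lp.fourier_toTemperedDistribution_eq (hf.toLp f))
  simp only [TemperedDistribution.fourier_apply, Lp.toTemperedDistribution_apply] at h
  rw [fourierL2, ← h, SchwartzMap.fourier_coe]
  refine integral_congr_ae ?_
  filter_upwards [hf.coeFn_toLp] with x hx
  rw [hx]

theorem lintegral_enorm_sq_fourierL2 {f : V → G} (hf : MemLp f 2) :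
    ∫⁻ ξ, ‖fourierL2 hf ξ‖ₑ ^ 2 = ∫⁻ x, ‖f x‖ₑ ^ 2 := by
  rw [lintegral_enorm_sq_eq_eLpNorm_sq, lintegral_enorm_sq_eq_eLpNorm_sq, fourierL2,
    eLpNorm_fourier_Lp, eLpNorm_congr_ae hf.coeFn_toLp]

theorem eq_fourierInv_of_fourierL2_ae_eq {f w : V → G} (hf : Continuous f) (hf2 : MemLp f 2)
    (hw : Integrable w) (hfw : fourierL2 hf2 =ᵐ[volume] w) : f = 𝓕⁻ w := by
  have hw2 : MemLp w 2 := (Lp.memLp _).ae_eq hfw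
  have hLp : 𝓕 (hf2.toLp f) = hw2.toLp w := Lp.ext (hfw.trans hw2.coeFn_toLp.symm)
  refine Measure.eq_of_ae_eq (μ := volume) ?_ hf (continuous_fourierInv_of_integrable hw)
  calc f =ᵐ[volume] hf2.toLp f := hf2.coeFn_toLp.symm
    _ = (𝓕⁻ (hw2.toLp w) : Lp (α := V) G 2 volume) := by rw [← hLp, fourierInv_fourier_eq]
    _ =ᵐ[volume] 𝓕⁻ w := coeFn_fourierInv_toLp hw hw2

theorem lintegral_enorm_sq_fourierInv {f : V → G} (h1 : Integrable f) (h2 : MemLp f 2) :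
    ∫⁻ x, ‖𝓕⁻ f x‖ₑ ^ 2 = ∫⁻ ξ, ‖f ξ‖ₑ ^ 2 := by
  have h := eLpNorm_fourier_Lp (𝓕⁻ (h2.toLp f) : Lp (α := V) G 2 volume)
  rw [fourier_fourierInv_eq] at h
  rw [lintegral_enorm_sq_eq_eLpNorm_sq, lintegral_enorm_sq_eq_eLpNorm_sq,
    ← eLpNorm_congr_ae (coeFn_fourierInv_toLp h1 h2), ← h, eLpNorm_congr_ae h2.coeFn_toLp]

theorem lintegral_enorm_sq_fourierInv_le {f : V → G} (h1 : Integrable f) :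
    ∫⁻ x, ‖𝓕⁻ f x‖ₑ ^ 2 ≤ ∫⁻ ξ, ‖f ξ‖ₑ ^ 2 := by
  rcases eq_top_or_lt_top (∫⁻ ξ, ‖f ξ‖ₑ ^ 2) with h | h
  · exact h ▸ le_top
  · exact (lintegral_enorm_sq_fourierInv h1
      ((memLp_two_iff_lintegral_enorm_sq_lt_top h1.1).2 h)).le

end Fourier

section ParameterIntegral

open Complex Metric
open scoped Real

variable {G : Type*} [NormedAddCommGroup G] [NormedSpace ℂ G]

theorem integral_eq_circleIntegral_integral [CompleteSpace G] {α : Type*} [MeasurableSpace α]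
    {μ : Measure α} [SFinite μ] {f : ℂ → α → G} {c w : ℂ} {R : ℝ} (hw : w ∈ ball c R)
    (hf : ∀ x, DiffContOnCl ℂ (fun z => f z x) (ball c R))
    (hint : Integrable (fun p : ℝ × α => f (circleMap c R p.1) p.2)
      ((volume.restrict (Ioc 0 (2 * π))).prod μ)) :
    ∫ x, f w x ∂μ =
      (2 * π * I : ℂ)⁻¹ • ∮ z in C(c, R), (z - w)⁻¹ • ∫ x, f z x ∂μ := by
  have hR : 0 ≤ R := dist_nonneg.trans (mem_ball.1 hw).le
  lift R to ℝ≥0 using hR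
  let K : ℝ → ℂ := fun θ => deriv (circleMap c R) θ * (circleMap c R θ - w)⁻¹
  have hK : Continuous K :=
    ((contDiff_circleMap c R (n := 1)).continuous_deriv le_rfl).mul <|
      Continuous.inv₀ (by fun_prop) fun θ => sub_ne_zero.2 (circleMap_ne_mem_ball hw θ)
  obtain ⟨B, hB⟩ := isCompact_Icc.exists_bound_of_continuousOn
    (hK.continuousOn (s := Icc 0 (2 * π)))
  have hKint : Integrable (fun p : ℝ × α => K p.1 • f (circleMap c R p.1) p.2)
      ((volume.restrict (Ioc 0 (2 * π))).prod μ) := by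
    refine hint.bdd_smul B hK.aestronglyMeasurable.comp_fst ?_
    exact Measure.quasiMeasurePreserving_fst.ae <| ae_restrict_of_forall_mem measurableSet_Ioc
      fun θ hθ => hB θ (Ioc_subset_Icc_self hθ)
  calc ∫ x, f w x ∂μ
      = ∫ x, (2 * π * I : ℂ)⁻¹ •
          (∫ θ in Ioc 0 (2 * π), K θ • f (circleMap c R θ) x) ∂μ := by
        refine integral_congr_ae (.of_forall fun x => ?_)
        simp only [← (hf x).two_pi_i_inv_smul_circleIntegral_sub_inv_smul hw, circleIntegral,
          intervalIntegral.integral_of_le Real.two_pi_pos.le, smul_smul, K]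
    _ = (2 * π * I : ℂ)⁻¹ •
          ∫ θ in Ioc 0 (2 * π), (∫ x, K θ • f (circleMap c R θ) x ∂μ) := by
        rw [integral_smul,
          integral_integral_swap (f := fun θ x => K θ • f (circleMap c R θ) x) hKint]
    _ = _ := by
        simp only [circleIntegral, intervalIntegral.integral_of_le Real.two_pi_pos.le,
          integral_smul, mul_smul, K]

theorem differentiableOn_integral_of_integrable_circleMap [CompleteSpace G] {α : Type*}
    [MeasurableSpace α] {μ : Measure α} [SFinite μ] {f : ℂ → α → G} {c : ℂ} {R : ℝ} (hR : 0 < R)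
    (hf : ∀ x, DiffContOnCl ℂ (fun w => f w x) (ball c R))
    (hint : Integrable (fun p : ℝ × α => f (circleMap c R p.1) p.2)
      ((volume.restrict (Ioc 0 (2 * π))).prod μ)) :
    DifferentiableOn ℂ (fun w => ∫ x, f w x ∂μ) (ball c R) := by
  lift R to ℝ≥0 using hR.le
  have hcirc : CircleIntegrable (fun z => ∫ x, f z x ∂μ) c R := by
    rw [CircleIntegrable, intervalIntegrable_iff_integrableOn_Ioc_of_le Real.two_pi_pos.le]
    exact hint.integral_prod_left
  have h := (hasFPowerSeriesOn_cauchy_integral hcirc (by exact_mod_cast hR)).differentiableOn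
  rw [Metric.eball_coe] at h
  exact h.congr fun w hw => integral_eq_circleIntegral_integral hw hf hint

theorem eq_of_differentiableOn_of_eq_im {S : Set ℂ} (hSo : IsOpen S) (hSc : IsPreconnected S)
    {f : ℂ → G} (hf : DifferentiableOn ℂ f S) {g : ℝ → G} (hfg : ∀ w, f w = g w.im) {w w' : ℂ}
    (hw : w ∈ S) (hw' : w' ∈ S) : f w = f w' := by
  refine hSo.is_const_of_deriv_eq_zero hSc hf (fun u hu => ?_) hw hw'
  have h := (hf.differentiableAt (hSo.mem_nhds hu)).hasDerivAt
  have hreal : HasDerivAt (fun t : ℝ => f (u + t)) (deriv f u) 0 := by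
    have h0 : HasDerivAt f (deriv f u) (u + ((0 : ℝ) : ℂ)) := by simpa using h
    simpa [Function.comp_def] using
      (h0.comp_const_add u ((0 : ℝ) : ℂ)).scomp (0 : ℝ) ofRealCLM.hasDerivAt
  have hconst : (fun t : ℝ => f (u + t)) = fun _ => f u := by
    funext t
    simp [hfg]
  rw [hconst] at hreal
  exact hreal.unique (hasDerivAt_const _ _)

end ParameterIntegral

section Tube

open Complex WithLp
open scoped Real Topology

variable {ι : Type*}

/-- The imaginary part of a point of `ℂ^ι`, as a vector of the Euclidean space `ℝ^ι`. -/
def imVec (z : ι → ℂ) : EuclideanSpace ℝ ι := toLp 2 fun i => (z i).im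

/-- The tube domain `ℝ^ι + iΩ` over a base `Ω`. -/
def tube (Ω : Set (EuclideanSpace ℝ ι)) : Set (ι → ℂ) := imVec ⁻¹' Ω

/-- The point `x + iy` of `ℂ^ι`. -/
def tubePoint (x y : EuclideanSpace ℝ ι) : ι → ℂ := fun i => x i + y i * I

@[simp] theorem imVec_tubePoint (x y : EuclideanSpace ℝ ι) : imVec (tubePoint x y) = y := by
  ext i
  simp [imVec, tubePoint]

theorem tubePoint_mem_tube {Ω : Set (EuclideanSpace ℝ ι)} {x y : EuclideanSpace ℝ ι} :
    tubePoint x y ∈ tube Ω ↔ y ∈ Ω := by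
  simp [tube]

theorem exists_tubePoint_imVec (z : ι → ℂ) : ∃ x, tubePoint x (imVec z) = z :=
  ⟨toLp 2 fun i => (z i).re, funext fun i => re_add_im (z i)⟩

theorem tubePoint_add_smul (x y v : EuclideanSpace ℝ ι) (w : ℂ) :
    tubePoint (x + w.re • v) (y + w.im • v) = tubePoint x y + w • tubePoint v 0 := by
  funext i
  apply Complex.ext <;> simp [tubePoint, mul_comm]

theorem continuous_imVec : Continuous (imVec : (ι → ℂ) → EuclideanSpace ℝ ι) :=
  (PiLp.continuous_toLp 2 _).comp (by fun_prop)

@[fun_prop]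
theorem continuous_tubePoint :
    Continuous fun p : EuclideanSpace ℝ ι × EuclideanSpace ℝ ι => tubePoint p.1 p.2 := by
  unfold tubePoint
  fun_prop

theorem isOpen_tube {Ω : Set (EuclideanSpace ℝ ι)} (hΩ : IsOpen Ω) : IsOpen (tube Ω) :=
  hΩ.preimage continuous_imVec

variable [Fintype ι] {Ω : Set (EuclideanSpace ℝ ι)} {H : (ι → ℂ) → ℂ}

theorem integral_tubePoint_add_smul {G : Type*} [NormedAddCommGroup G] [NormedSpace ℝ G]
    (H : (ι → ℂ) → G) (y v : EuclideanSpace ℝ ι) (w : ℂ) :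
    ∫ x, H (tubePoint x y + w • tubePoint v 0) = ∫ x, H (tubePoint x (y + w.im • v)) := by
  simp only [← tubePoint_add_smul]
  exact integral_add_right_eq_self (fun x => H (tubePoint x (y + w.im • v))) (w.re • v)

theorem lintegral_tubePoint_add_smul (H : (ι → ℂ) → ℝ≥0∞) (y v : EuclideanSpace ℝ ι) (w : ℂ) :
    ∫⁻ x, H (tubePoint x y + w • tubePoint v 0) = ∫⁻ x, H (tubePoint x (y + w.im • v)) := by
  simp only [← tubePoint_add_smul]
  exact lintegral_add_right_eq_self (fun x => H (tubePoint x (y + w.im • v))) (w.re • v)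

theorem differentiableOn_integral_tubePoint_add_smul (hΩ : IsOpen Ω)
    (hH : DifferentiableOn ℂ H (tube Ω))
    (hbdd : ∀ y ∈ Ω, ∃ N : ℝ≥0, ∀ᶠ y' in 𝓝 y, ∫⁻ x, ‖H (tubePoint x y')‖ₑ ≤ N)
    (y v : EuclideanSpace ℝ ι) :
    DifferentiableOn ℂ (fun w : ℂ => ∫ x, H (tubePoint x y + w • tubePoint v 0))
      {w | y + w.im • v ∈ Ω} := by
  intro w₀ hw₀
  obtain ⟨N, hN⟩ := hbdd _ hw₀
  have hline : Continuous fun w : ℂ => y + w.im • v := by fun_prop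
  obtain ⟨R, hR, hball⟩ := Metric.nhds_basis_closedBall.mem_iff.1
    (hline.continuousAt.eventually ((hΩ.eventually_mem hw₀).and hN))
  have hmem : ∀ w ∈ Metric.closedBall w₀ R, ∀ x, tubePoint x y + w • tubePoint v 0 ∈ tube Ω :=
    fun w hw x => tubePoint_add_smul x y v w ▸ tubePoint_mem_tube.2 (hball hw).1
  have hcircle : ∀ θ, circleMap w₀ R θ ∈ Metric.closedBall w₀ R :=
    circleMap_mem_closedBall w₀ hR.le
  have hcont : Continuous fun p : ℝ × EuclideanSpace ℝ ι =>
      H (tubePoint p.2 y + circleMap w₀ R p.1 • tubePoint v 0) :=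
    hH.continuousOn.comp_continuous (by fun_prop) fun p => hmem _ (hcircle p.1) p.2
  refine ((differentiableOn_integral_of_integrable_circleMap hR (fun x => ?_) ⟨?_, ?_⟩)
    |>.differentiableAt (Metric.ball_mem_nhds w₀ hR)).differentiableWithinAt
  · refine DifferentiableOn.diffContOnCl_ball (U := Metric.closedBall w₀ R) ?_ subset_rfl
    exact hH.comp (by fun_prop) fun w hw => hmem w hw x
  · exact hcont.aestronglyMeasurable
  · rw [HasFiniteIntegral, lintegral_prod _ hcont.aestronglyMeasurable.enorm]
    calc ∫⁻ θ in Ioc 0 (2 * π), ∫⁻ x, ‖H (tubePoint x y + circleMap w₀ R θ • tubePoint v 0)‖ₑ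
        ≤ ∫⁻ _ in Ioc 0 (2 * π), (N : ℝ≥0∞) := lintegral_mono fun θ => by
          rw [lintegral_tubePoint_add_smul (fun z => ‖H z‖ₑ)]
          exact (hball (hcircle θ)).2
      _ < ⊤ := by simp [ENNReal.mul_lt_top_iff]

-- Along the complex line through `y` and `y'` the integral is holomorphic, and by translation
-- invariance it depends only on the imaginary part of the parameter; hence it is constant.
theorem integral_tubePoint_eq (hΩo : IsOpen Ω) (hΩc : Convex ℝ Ω)
    (hH : DifferentiableOn ℂ H (tube Ω))
    (hbdd : ∀ y ∈ Ω, ∃ N : ℝ≥0, ∀ᶠ y' in 𝓝 y, ∫⁻ x, ‖H (tubePoint x y')‖ₑ ≤ N)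
    {y y' : EuclideanSpace ℝ ι} (hy : y ∈ Ω) (hy' : y' ∈ Ω) :
    ∫ x, H (tubePoint x y) = ∫ x, H (tubePoint x y') := by
  let S : Set ℂ := {w | y + w.im • (y' - y) ∈ Ω}
  have hSo : IsOpen S := hΩo.preimage (by fun_prop)
  have hSc : Convex ℝ S :=
    (hΩc.translate_preimage_right y).linear_preimage (imLm.smulRight (y' - y))
  have h := eq_of_differentiableOn_of_eq_im hSo hSc.isPreconnected
    (differentiableOn_integral_tubePoint_add_smul hΩo hH hbdd y (y' - y))
    (g := fun t => ∫ x, H (tubePoint x (y + t • (y' - y))))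
    (fun w => integral_tubePoint_add_smul H y (y' - y) w)
    (w := 0) (w' := I) (by simpa [S] using hy) (by simpa [S] using hy')
  simpa [integral_tubePoint_add_smul] using h

end Tube

section ExpTilt

open Metric
open scoped RealInnerProductSpace Real Topology

variable {V G : Type*} [NormedAddCommGroup V] [InnerProductSpace ℝ V] [NormedAddCommGroup G]
  [NormedSpace ℝ G] {y : V} {D : Set V} {k : V → G}

/-- The exponential tilt `ξ ↦ exp(-2π⟪y, ξ⟫) k(ξ)` of `k`; the Fourier–Laplace transform of `k`
restricted to the slice `ℝ^ι + iy` is the inverse Fourier transform of this function. -/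
def expTilt (y : V) (k : V → G) : V → G := fun ξ => Real.exp (-(2 * π * ⟪y, ξ⟫)) • k ξ

theorem expTilt_expTilt (y y' : V) (k : V → G) :
    expTilt y (expTilt y' k) = expTilt (y + y') k := by
  funext ξ
  simp only [expTilt, smul_smul, ← Real.exp_add, inner_add_left]
  ring_nf

@[simp] theorem expTilt_zero (k : V → G) : expTilt 0 k = k := by
  funext ξ
  simp [expTilt]

theorem norm_expTilt (y : V) (k : V → G) (ξ : V) :
    ‖expTilt y k ξ‖ = Real.exp (-(2 * π * ⟪y, ξ⟫)) * ‖k ξ‖ := by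
  rw [expTilt, norm_smul, Real.norm_of_nonneg (Real.exp_nonneg _)]

-- Every direction lies close to one of the finitely many `u` covering the unit ball, and tilting by
-- `y - δ • u` instead of `y` gains a factor `exp (π δ ‖ξ‖)` in the directions close to `u`.
theorem exists_exp_mul_norm_mul_le_sum [FiniteDimensional ℝ V] (hD : D ∈ 𝓝 y) :
    ∃ S : Finset V, ↑S ⊆ D ∧ ∃ ε > 0, ∀ ξ : V,
      Real.exp (ε * ‖ξ‖) * Real.exp (-(2 * π * ⟪y, ξ⟫)) ≤
        ∑ s ∈ S, Real.exp (-(2 * π * ⟪s, ξ⟫)) := by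
  classical
  obtain ⟨δ, hδ, hball⟩ := nhds_basis_closedBall.mem_iff.1 hD
  obtain ⟨t, ht, htfin, hcover⟩ :=
    (isCompact_closedBall (0 : V) 1).finite_cover_balls (e := 1 / 2) (by norm_num)
  refine ⟨htfin.toFinset.image fun u => y - δ • u, ?_, π * δ, by positivity, fun ξ => ?_⟩
  · simp only [Finset.coe_image, htfin.coe_toFinset, image_subset_iff]
    intro u hu
    have hu1 : ‖u‖ ≤ 1 := by simpa using ht hu
    refine hball ?_
    simpa [norm_smul, abs_of_pos hδ] using mul_le_of_le_one_right hδ.le hu1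
  have hunit : ‖ξ‖⁻¹ • ξ ∈ closedBall (0 : V) 1 := by
    simpa [norm_smul] using inv_mul_le_one
  obtain ⟨u, hu, hdist⟩ := mem_iUnion₂.1 (hcover hunit)
  have hinner : ‖ξ‖ / 2 ≤ ⟪u, ξ⟫ := by
    have hself : ⟪‖ξ‖⁻¹ • ξ, ξ⟫ = ‖ξ‖ := by
      rw [real_inner_smul_left, real_inner_self_eq_norm_sq, pow_two, ← mul_assoc,
        mul_comm ‖ξ‖⁻¹, mul_inv_mul_cancel]
    have hdiff : ⟪‖ξ‖⁻¹ • ξ - u, ξ⟫ ≤ 1 / 2 * ‖ξ‖ := by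
      refine (real_inner_le_norm _ _).trans ?_
      rw [mem_ball, dist_eq_norm] at hdist
      gcongr
    rw [inner_sub_left, hself] at hdiff
    linarith
  calc Real.exp (π * δ * ‖ξ‖) * Real.exp (-(2 * π * ⟪y, ξ⟫))
      ≤ Real.exp (-(2 * π * ⟪y - δ • u, ξ⟫)) := by
        rw [← Real.exp_add, inner_sub_left, real_inner_smul_left]
        refine Real.exp_le_exp.2 ?_
        have := mul_le_mul_of_nonneg_left hinner (by positivity : 0 ≤ 2 * π * δ)
        linarith
    _ ≤ _ := Finset.single_le_sum (f := fun s => Real.exp (-(2 * π * ⟪s, ξ⟫)))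
        (fun s _ => Real.exp_nonneg _)
        (Finset.mem_image_of_mem (fun u => y - δ • u) (htfin.mem_toFinset.2 hu))

theorem norm_expTilt_le_exp_mul_norm {ε : ℝ} {y' : V} (h : 2 * π * ‖y' - y‖ ≤ ε) (ξ : V) :
    ‖expTilt y' k ξ‖ ≤ Real.exp (ε * ‖ξ‖) * ‖expTilt y k ξ‖ := by
  rw [norm_expTilt, norm_expTilt, ← mul_assoc, ← Real.exp_add]
  gcongr
  have hinner : -(2 * π * ⟪y' - y, ξ⟫) ≤ ε * ‖ξ‖ := calc
    -(2 * π * ⟪y' - y, ξ⟫) = 2 * π * -⟪y' - y, ξ⟫ := by ring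
    _ ≤ 2 * π * (‖y' - y‖ * ‖ξ‖) := by
      gcongr
      exact (neg_le_abs _).trans (abs_real_inner_le_norm _ _)
    _ ≤ ε * ‖ξ‖ := by
      rw [← mul_assoc]
      gcongr
  rw [inner_sub_left] at hinner
  linarith

variable [MeasurableSpace V] [BorelSpace V] {μ : Measure V}

theorem aestronglyMeasurable_expTilt_iff :
    AEStronglyMeasurable (expTilt y k) μ ↔ AEStronglyMeasurable k μ := by
  have h (y : V) (k : V → G) (hk : AEStronglyMeasurable k μ) :
      AEStronglyMeasurable (expTilt y k) μ :=
    (by fun_prop : Continuous fun ξ => Real.exp (-(2 * π * ⟪y, ξ⟫))).aestronglyMeasurable.smul hk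
  refine ⟨fun hk => ?_, h y k⟩
  simpa [expTilt_expTilt] using h (-y) _ hk

theorem exists_memLp_exp_mul_norm_smul_expTilt [FiniteDimensional ℝ V] {p : ℝ≥0∞}
    (hD : D ∈ 𝓝 y) (hk : ∀ s ∈ D, MemLp (expTilt s k) p μ) :
    ∃ ε > 0, MemLp (fun ξ => Real.exp (ε * ‖ξ‖) • expTilt y k ξ) p μ := by
  obtain ⟨S, hSD, ε, hε, hS⟩ := exists_exp_mul_norm_mul_le_sum hD
  have hmeas := (hk y (mem_of_mem_nhds hD)).1
  have hsum : MemLp (fun ξ => ∑ s ∈ S, ‖expTilt s k ξ‖) p μ :=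
    memLp_finsetSum _ fun s hs => (hk s (hSD hs)).norm
  refine ⟨ε, hε, hsum.mono' ?_ (.of_forall fun ξ => ?_)⟩
  · exact (by fun_prop : Continuous fun ξ : V => Real.exp (ε * ‖ξ‖)).aestronglyMeasurable
      |>.smul hmeas
  · simp only [norm_smul, norm_expTilt, Real.norm_eq_abs, Real.abs_exp, ← Finset.sum_mul,
      ← mul_assoc]
    exact mul_le_mul_of_nonneg_right (hS ξ) (norm_nonneg _)

theorem exists_memLp_bound_expTilt [FiniteDimensional ℝ V] {p : ℝ≥0∞} (hD : D ∈ 𝓝 y)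
    (hk : ∀ s ∈ D, MemLp (expTilt s k) p μ) :
    ∃ b : V → ℝ, MemLp b p μ ∧ ∀ᶠ y' in 𝓝 y, ∀ ξ, ‖expTilt y' k ξ‖ ≤ b ξ := by
  obtain ⟨ε, hε, hint⟩ := exists_memLp_exp_mul_norm_smul_expTilt hD hk
  refine ⟨_, hint.norm, ?_⟩
  filter_upwards [ball_mem_nhds y (show 0 < ε / (2 * π) by positivity)] with y' hy' ξ
  rw [mem_ball, dist_eq_norm, lt_div_iff₀' (by positivity)] at hy'
  rw [norm_smul, Real.norm_of_nonneg (Real.exp_nonneg _)]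
  exact norm_expTilt_le_exp_mul_norm hy'.le ξ

theorem integrable_exp_neg_mul_norm [FiniteDimensional ℝ V] [μ.IsAddHaarMeasure] {ε : ℝ}
    (hε : 0 < ε) : Integrable (fun ξ : V => Real.exp (-(ε * ‖ξ‖))) μ := by
  let n := Module.finrank ℝ V + 1
  have hjap := (integrable_one_add_norm (E := V) (μ := μ) (r := n) (by simp [n])).const_mul
    (n.factorial / ε ^ n * Real.exp ε)
  refine hjap.mono' (by fun_prop) (.of_forall fun ξ => ?_)
  have hpow := Real.pow_div_factorial_le_exp (ε * (1 + ‖ξ‖)) (by positivity) n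
  rw [Real.norm_of_nonneg (Real.exp_nonneg _), Real.rpow_neg (by positivity), Real.rpow_natCast,
    Real.exp_neg, ← div_eq_mul_inv, inv_le_comm₀ (Real.exp_pos _) (by positivity), inv_div]
  calc (1 + ‖ξ‖) ^ n / (n.factorial / ε ^ n * Real.exp ε)
      = (ε * (1 + ‖ξ‖)) ^ n / n.factorial / Real.exp ε := by
        rw [mul_pow]
        field_simp
    _ ≤ Real.exp (ε * (1 + ‖ξ‖)) / Real.exp ε := by gcongr
    _ = Real.exp (ε * ‖ξ‖) := by
        rw [← Real.exp_sub]
        ring_nf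

variable (D k μ) in
/-- The natural class of densities whose Fourier–Laplace integral converges absolutely over the
tube with base `D`. -/
def IsLaplaceDensity : Prop := ∀ y ∈ D, Integrable (expTilt y k) μ

namespace IsLaplaceDensity

theorem aestronglyMeasurable (hD : D.Nonempty) (hk : IsLaplaceDensity D k μ) :
    AEStronglyMeasurable k μ :=
  aestronglyMeasurable_expTilt_iff.1 (hk _ hD.some_mem).1

theorem of_memLp_two [FiniteDimensional ℝ V] [μ.IsAddHaarMeasure] (hD : IsOpen D)
    (hk : ∀ y ∈ D, MemLp (expTilt y k) 2 μ) : IsLaplaceDensity D k μ := by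
  intro y hy
  obtain ⟨ε, hε, hint⟩ := exists_memLp_exp_mul_norm_smul_expTilt (hD.mem_nhds hy) hk
  have hexp : MemLp (fun ξ : V => Real.exp (-(ε * ‖ξ‖))) 2 μ := by
    rw [memLp_two_iff_integrable_sq (by fun_prop)]
    convert integrable_exp_neg_mul_norm (μ := μ) (V := V) (ε := 2 * ε) (by positivity) using 2
    rw [← Real.exp_nat_mul]
    ring_nf
  refine (memLp_one_iff_integrable.1 (hint.smul hexp)).congr (.of_forall fun ξ => ?_)
  simp [smul_smul, ← Real.exp_add]

theorem exists_integrable_exp_mul_norm_smul [FiniteDimensional ℝ V] (hD : IsOpen D)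
    (hk : IsLaplaceDensity D k μ) (hy : y ∈ D) :
    ∃ ε > 0, Integrable (fun ξ => Real.exp (ε * ‖ξ‖) • expTilt y k ξ) μ := by
  simp only [← memLp_one_iff_integrable]
  exact exists_memLp_exp_mul_norm_smul_expTilt (hD.mem_nhds hy)
    fun s hs => memLp_one_iff_integrable.2 (hk s hs)

theorem smul_of_norm_le_pow {𝕜 : Type*} [NormedField 𝕜] [NormedSpace 𝕜 G]
    [SMulCommClass ℝ 𝕜 G] [FiniteDimensional ℝ V] (hD : IsOpen D) (hk : IsLaplaceDensity D k μ)
    {p : V → 𝕜} (hp : Continuous p) {A : ℝ} {n : ℕ} (hpA : ∀ ξ, ‖p ξ‖ ≤ A * ‖ξ‖ ^ n) :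
    IsLaplaceDensity D (fun ξ => p ξ • k ξ) μ := by
  intro y hy
  have : ProperSpace V := FiniteDimensional.proper_real V
  obtain ⟨ε, hε, hint⟩ := hk.exists_integrable_exp_mul_norm_smul hD hy
  have hA (ξ : V) : A * ‖ξ‖ ^ n ≤ |A| * (n.factorial / ε ^ n) * Real.exp (ε * ‖ξ‖) := by
    have hpow := Real.pow_div_factorial_le_exp (ε * ‖ξ‖) (by positivity) n
    rw [mul_pow, div_le_iff₀ (by positivity), ← le_div_iff₀' (by positivity)] at hpow
    calc A * ‖ξ‖ ^ n ≤ |A| * (Real.exp (ε * ‖ξ‖) * n.factorial / ε ^ n) :=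
          mul_le_mul (le_abs_self A) hpow (by positivity) (abs_nonneg A)
      _ = _ := by ring
  refine (hint.norm.const_mul (|A| * (n.factorial / ε ^ n))).mono' ?_ (.of_forall fun ξ => ?_)
  · exact aestronglyMeasurable_expTilt_iff.2
      (hp.aestronglyMeasurable.smul (aestronglyMeasurable_expTilt_iff.1 (hk y hy).1))
  · rw [norm_expTilt, norm_smul, norm_smul, norm_expTilt, Real.norm_of_nonneg (Real.exp_nonneg _)]
    calc Real.exp (-(2 * π * ⟪y, ξ⟫)) * (‖p ξ‖ * ‖k ξ‖)
        ≤ Real.exp (-(2 * π * ⟪y, ξ⟫)) *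
            (|A| * (n.factorial / ε ^ n) * Real.exp (ε * ‖ξ‖) * ‖k ξ‖) := by
          gcongr
          exact (hpA ξ).trans (hA ξ)
      _ = _ := by ring

theorem norm_smul [FiniteDimensional ℝ V] (hD : IsOpen D) (hk : IsLaplaceDensity D k μ) :
    IsLaplaceDensity D (fun ξ => ‖ξ‖ • k ξ) μ :=
  hk.smul_of_norm_le_pow hD continuous_norm (A := 1) (n := 1) (by simp)

end IsLaplaceDensity

end ExpTilt

section FourierLaplace

open Complex
open scoped RealInnerProductSpace Real FourierTransform

variable {ι : Type*} [Fintype ι]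

/-- The bilinear pairing `ξ · z = ∑ i, ξ i * z i` of a real frequency with a complex point. -/
def pairing : EuclideanSpace ℝ ι →L[ℝ] (ι → ℂ) →L[ℂ] ℂ :=
  ∑ i, (ofRealCLM ∘L EuclideanSpace.proj i).smulRight (ContinuousLinearMap.proj i)

theorem pairing_apply (ξ : EuclideanSpace ℝ ι) (z : ι → ℂ) : pairing ξ z = ∑ i, ξ i * z i := by
  simp [pairing]

theorem pairing_im (ξ : EuclideanSpace ℝ ι) (z : ι → ℂ) : (pairing ξ z).im = ⟪imVec z, ξ⟫ := by
  simp [pairing_apply, imVec, PiLp.inner_apply]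

theorem pairing_tubePoint (ξ x y : EuclideanSpace ℝ ι) :
    pairing ξ (tubePoint x y) = ⟪ξ, x⟫ + ⟪y, ξ⟫ * I := by
  apply Complex.ext
  · simp [pairing_apply, tubePoint, PiLp.inner_apply, mul_comm]
  · simp [pairing_im, real_inner_comm]

/-- The Fourier–Laplace transform `z ↦ ∫ exp(2πi ξ·z) k(ξ) dξ` of a density on `ℝ^ι`. -/
def fourierLaplace (k : EuclideanSpace ℝ ι → ℂ) (z : ι → ℂ) : ℂ :=
  ∫ ξ, cexp (2 * π * I * pairing ξ z) * k ξ

variable {k : EuclideanSpace ℝ ι → ℂ} {D : Set (EuclideanSpace ℝ ι)}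

theorem norm_cexp_pairing_mul (ξ : EuclideanSpace ℝ ι) (z : ι → ℂ) :
    ‖cexp (2 * π * I * pairing ξ z) * k ξ‖ = ‖expTilt (imVec z) k ξ‖ := by
  rw [norm_mul, norm_exp, norm_expTilt]
  congr 2
  simp [pairing_im]

theorem fourierLaplace_tubePoint (x y : EuclideanSpace ℝ ι) :
    fourierLaplace k (tubePoint x y) = 𝓕⁻ (expTilt y k) x := by
  rw [fourierLaplace, Real.fourierInv_eq']
  refine integral_congr_ae (.of_forall fun ξ => ?_)
  simp only [pairing_tubePoint, expTilt, real_smul, smul_eq_mul, ofReal_exp, ← mul_assoc,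
    ← Complex.exp_add]
  congr 2
  push_cast
  linear_combination 2 * π * ⟪y, ξ⟫ * I_sq

theorem aestronglyMeasurable_cexp_pairing_mul (hk : AEStronglyMeasurable k) (z : ι → ℂ) :
    AEStronglyMeasurable fun ξ => cexp (2 * π * I * pairing ξ z) * k ξ :=
  (by fun_prop : Continuous fun ξ => cexp (2 * π * I * pairing ξ z)).aestronglyMeasurable.mul hk

theorem IsLaplaceDensity.integrable_cexp_pairing_mul (hk : IsLaplaceDensity D k volume)
    {z : ι → ℂ} (hz : z ∈ tube D) :
    Integrable fun ξ => cexp (2 * π * I * pairing ξ z) * k ξ :=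
  (hk _ hz).norm.mono' (aestronglyMeasurable_cexp_pairing_mul
    (aestronglyMeasurable_expTilt_iff.1 (hk _ hz).1) z)
    (.of_forall fun ξ => (norm_cexp_pairing_mul ξ z).le)

theorem hasFDerivAt_cexp_pairing_mul (ξ : EuclideanSpace ℝ ι) (z : ι → ℂ) :
    HasFDerivAt (fun z => cexp (2 * π * I * pairing ξ z) * k ξ)
      ((2 * π * I * (cexp (2 * π * I * pairing ξ z) * k ξ)) • pairing ξ) z := by
  convert! (((pairing ξ).hasFDerivAt (x := z)).const_mul (2 * π * I)).cexp.mul_const (k ξ) using 1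
  ext v
  simp only [smul_apply, smul_eq_mul]
  ring

theorem norm_smul_pairing_le (ξ : EuclideanSpace ℝ ι) (z : ι → ℂ) :
    ‖(2 * π * I * (cexp (2 * π * I * pairing ξ z) * k ξ)) • pairing ξ‖ ≤
      2 * π * ‖pairing (ι := ι)‖ * ‖expTilt (imVec z) (fun ξ => ‖ξ‖ • k ξ) ξ‖ := by
  rw [norm_smul, norm_mul, norm_cexp_pairing_mul, norm_expTilt, norm_expTilt, norm_smul, norm_norm,
    show ‖(2 * π * I : ℂ)‖ = 2 * π by simp [Real.pi_nonneg]]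
  calc 2 * π * (Real.exp (-(2 * π * ⟪imVec z, ξ⟫)) * ‖k ξ‖) * ‖pairing ξ‖
      ≤ 2 * π * (Real.exp (-(2 * π * ⟪imVec z, ξ⟫)) * ‖k ξ‖) * (‖pairing (ι := ι)‖ * ‖ξ‖) := by
        gcongr
        exact pairing.le_opNorm ξ
    _ = _ := by ring

theorem aestronglyMeasurable_smul_pairing (hk : AEStronglyMeasurable k) (z : ι → ℂ) :
    AEStronglyMeasurable fun ξ =>
      (2 * π * I * (cexp (2 * π * I * pairing ξ z) * k ξ)) • pairing ξ :=
  ((aestronglyMeasurable_cexp_pairing_mul hk z).const_mul _).smul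
    (by fun_prop : Continuous fun ξ => pairing ξ).aestronglyMeasurable

namespace IsLaplaceDensity

theorem hasFDerivAt_fourierLaplace (hD : IsOpen D) (hk : IsLaplaceDensity D k volume) {z : ι → ℂ}
    (hz : z ∈ tube D) :
    HasFDerivAt (fourierLaplace k)
      (∫ ξ, (2 * π * I * (cexp (2 * π * I * pairing ξ z) * k ξ)) • pairing ξ) z := by
  obtain ⟨b, hb, hbound⟩ := exists_memLp_bound_expTilt (hD.mem_nhds hz) fun s hs =>
    memLp_one_iff_integrable.2 (hk.norm_smul hD s hs)
  have hkm := aestronglyMeasurable_expTilt_iff.1 (hk _ hz).1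
  exact hasFDerivAt_integral_of_dominated_of_fderiv_le
    (continuous_imVec.continuousAt.eventually hbound)
    (.of_forall fun w => aestronglyMeasurable_cexp_pairing_mul hkm w)
    (hk.integrable_cexp_pairing_mul hz) (aestronglyMeasurable_smul_pairing hkm z)
    (.of_forall fun ξ w hw => (norm_smul_pairing_le ξ w).trans
      (mul_le_mul_of_nonneg_left (hw ξ) (by positivity)))
    ((memLp_one_iff_integrable.1 hb).const_mul _)
    (.of_forall fun ξ w _ => hasFDerivAt_cexp_pairing_mul ξ w)

theorem fderiv_fourierLaplace_apply (hD : IsOpen D) (hk : IsLaplaceDensity D k volume)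
    {z : ι → ℂ} (hz : z ∈ tube D) (v : ι → ℂ) :
    fderiv ℂ (fourierLaplace k) z v =
      fourierLaplace (fun ξ => (2 * π * I * pairing ξ v) * k ξ) z := by
  rw [(hk.hasFDerivAt_fourierLaplace hD hz).fderiv, ContinuousLinearMap.integral_apply]
  · refine integral_congr_ae (.of_forall fun ξ => ?_)
    simp only [smul_apply, smul_eq_mul]
    ring
  · exact ((hk.norm_smul hD _ hz).norm.const_mul (2 * π * ‖pairing (ι := ι)‖)).mono'
      (aestronglyMeasurable_smul_pairing (aestronglyMeasurable_expTilt_iff.1 (hk _ hz).1) z)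
      (.of_forall fun ξ => norm_smul_pairing_le ξ z)

theorem differentiableOn_fourierLaplace (hD : IsOpen D) (hk : IsLaplaceDensity D k volume) :
    DifferentiableOn ℂ (fourierLaplace k) (tube D) := fun _ hz =>
  (hk.hasFDerivAt_fourierLaplace hD hz).differentiableAt.differentiableWithinAt

end IsLaplaceDensity

end FourierLaplace

section PaleyWiener

open Complex
open scoped RealInnerProductSpace Real Topology FourierTransform ContDiff

variable {ι : Type*} {Ω : Set (EuclideanSpace ℝ ι)} {F : (ι → ℂ) → ℂ} {C : ℝ≥0}
  {ψ : EuclideanSpace ℝ ι → ℂ} {y y' : EuclideanSpace ℝ ι}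

theorem continuous_comp_tubePoint (hΩ : IsOpen Ω) (hF : DifferentiableOn ℂ F (tube Ω))
    (hy : y ∈ Ω) : Continuous fun x => F (tubePoint x y) :=
  continuous_iff_continuousAt.2 fun x =>
    (hF.continuousOn.continuousAt ((isOpen_tube hΩ).mem_nhds (tubePoint_mem_tube.2 hy))).comp
      (f := fun x => tubePoint x y) (by fun_prop)

variable [Fintype ι]

theorem memLp_two_comp_tubePoint (hΩ : IsOpen Ω) (hF : DifferentiableOn ℂ F (tube Ω))
    (hFC : ∀ y ∈ Ω, ∫⁻ x, ‖F (tubePoint x y)‖ₑ ^ 2 ≤ C) (hy : y ∈ Ω) :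
    MemLp (fun x => F (tubePoint x y)) 2 :=
  (memLp_two_iff_lintegral_enorm_sq_lt_top
    (continuous_comp_tubePoint hΩ hF hy).aestronglyMeasurable).2
    ((hFC y hy).trans_lt ENNReal.coe_lt_top)

theorem memLp_expTilt_of_hasCompactSupport (hψ : Continuous ψ) (hψc : HasCompactSupport ψ)
    (y : EuclideanSpace ℝ ι) (p : ℝ≥0∞) : MemLp (expTilt y ψ) p :=
  Continuous.memLp_of_hasCompactSupport
    ((by fun_prop : Continuous fun ξ => Real.exp (-(2 * π * ⟪y, ξ⟫))).smul hψ) hψc.smul_left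

theorem isLaplaceDensity_of_hasCompactSupport (hψ : Continuous ψ) (hψc : HasCompactSupport ψ) :
    IsLaplaceDensity univ ψ volume := fun y _ =>
  memLp_one_iff_integrable.1 (memLp_expTilt_of_hasCompactSupport hψ hψc y 1)

theorem fourierLaplace_neg_tubePoint (ψ : EuclideanSpace ℝ ι → ℂ) (x y : EuclideanSpace ℝ ι) :
    fourierLaplace ψ (-tubePoint x y) = 𝓕 (expTilt (-y) ψ) x := by
  have hneg : -tubePoint x y = tubePoint (-x) (-y) := by
    funext i
    simp only [Pi.neg_apply, tubePoint, PiLp.neg_apply, ofReal_neg]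
    ring
  rw [hneg, fourierLaplace_tubePoint, Real.fourierInv_eq_fourier_neg, neg_neg]

theorem eventually_lintegral_enorm_sq_fourierLaplace_neg_le (hψ : Continuous ψ)
    (hψc : HasCompactSupport ψ) (y : EuclideanSpace ℝ ι) :
    ∃ N : ℝ≥0, ∀ᶠ y' in 𝓝 y, ∫⁻ x, ‖fourierLaplace ψ (-tubePoint x y')‖ₑ ^ 2 ≤ N := by
  obtain ⟨b, hb, hbound⟩ := exists_memLp_bound_expTilt (y := -y) Filter.univ_mem fun s _ =>
    memLp_expTilt_of_hasCompactSupport hψ hψc s 2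
  lift ∫⁻ ξ, ‖b ξ‖ₑ ^ 2 to ℝ≥0 using
    ((memLp_two_iff_lintegral_enorm_sq_lt_top hb.1).1 hb).ne with N hN
  refine ⟨N, ?_⟩
  filter_upwards [continuous_neg.continuousAt.eventually hbound] with y' hy'
  have hint := memLp_one_iff_integrable.1 (memLp_expTilt_of_hasCompactSupport hψ hψc (-y') 1)
  calc ∫⁻ x, ‖fourierLaplace ψ (-tubePoint x y')‖ₑ ^ 2
      = ∫⁻ x, ‖𝓕⁻ (expTilt (-y') ψ) (-x)‖ₑ ^ 2 := by
        simp only [fourierLaplace_neg_tubePoint, Real.fourierInv_eq_fourier_neg, neg_neg]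
    _ = ∫⁻ x, ‖𝓕⁻ (expTilt (-y') ψ) x‖ₑ ^ 2 :=
        lintegral_neg_eq_self (fun x => ‖𝓕⁻ (expTilt (-y') ψ) x‖ₑ ^ 2)
    _ ≤ ∫⁻ ξ, ‖expTilt (-y') ψ ξ‖ₑ ^ 2 := lintegral_enorm_sq_fourierInv_le hint
    _ ≤ ∫⁻ ξ, ‖b ξ‖ₑ ^ 2 := by
        gcongr with ξ
        exact enorm_le_iff_norm_le.2 ((hy' ξ).trans (le_abs_self _))
    _ = N := hN.symm

-- The product of `F` with an entire test function decaying in `x` has height-independent integrals;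
-- on the Fourier side this says that undoing the tilt by `y` gives the same density for every `y`.
theorem integral_mul_fourierLaplace_neg_tubePoint_eq (hΩo : IsOpen Ω) (hΩc : Convex ℝ Ω)
    (hF : DifferentiableOn ℂ F (tube Ω)) (hFC : ∀ y ∈ Ω, ∫⁻ x, ‖F (tubePoint x y)‖ₑ ^ 2 ≤ C)
    (hψ : Continuous ψ) (hψc : HasCompactSupport ψ) (hy : y ∈ Ω) (hy' : y' ∈ Ω) :
    ∫ x, fourierLaplace ψ (-tubePoint x y) * F (tubePoint x y) =
      ∫ x, fourierLaplace ψ (-tubePoint x y') * F (tubePoint x y') := by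
  have hdiff : Differentiable ℂ (fourierLaplace ψ) := fun z =>
    ((isLaplaceDensity_of_hasCompactSupport hψ hψc).hasFDerivAt_fourierLaplace isOpen_univ
      (mem_univ (imVec z))).differentiableAt
  refine integral_tubePoint_eq (H := fun z => fourierLaplace ψ (-z) * F z) hΩo hΩc
    ((hdiff.comp differentiable_id.neg).differentiableOn.mul hF) (fun y hy => ?_) hy hy'
  obtain ⟨N, hN⟩ := eventually_lintegral_enorm_sq_fourierLaplace_neg_le hψ hψc y
  refine ⟨N + C, ?_⟩
  filter_upwards [hN, hΩo.mem_nhds hy] with y' hy' hy'Ω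
  have hmeas : Measurable fun x => ‖F (tubePoint x y')‖ₑ ^ 2 :=
    (continuous_comp_tubePoint hΩo hF hy'Ω).measurable.enorm.pow_const 2
  calc ∫⁻ x, ‖fourierLaplace ψ (-tubePoint x y') * F (tubePoint x y')‖ₑ
      ≤ ∫⁻ x, (‖fourierLaplace ψ (-tubePoint x y')‖ₑ ^ 2 + ‖F (tubePoint x y')‖ₑ ^ 2) := by
        gcongr with x
        rw [enorm_mul, enorm_eq_nnnorm, enorm_eq_nnnorm]
        norm_cast
        exact (le_mul_of_one_le_left (by positivity) one_le_two).trans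
          (mul_assoc (2 : ℝ≥0) _ _ ▸ two_mul_le_add_sq _ _)
    _ ≤ N + C := by
        rw [lintegral_add_right _ hmeas]
        exact add_le_add hy' (hFC y' hy'Ω)

theorem expTilt_neg_fourier_comp_tubePoint_ae_eq (hΩo : IsOpen Ω) (hΩc : Convex ℝ Ω)
    (hF : DifferentiableOn ℂ F (tube Ω)) (hFC : ∀ y ∈ Ω, ∫⁻ x, ‖F (tubePoint x y)‖ₑ ^ 2 ≤ C)
    (hy : y ∈ Ω) (hy' : y' ∈ Ω) :
    expTilt (-y) (fourierL2 (memLp_two_comp_tubePoint hΩo hF hFC hy)) =ᵐ[volume]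
      expTilt (-y') (fourierL2 (memLp_two_comp_tubePoint hΩo hF hFC hy')) := by
  have hloc (y : EuclideanSpace ℝ ι) (f : Lp (α := EuclideanSpace ℝ ι) ℂ 2 volume) :
      LocallyIntegrable (expTilt (-y) f) :=
    ((Lp.memLp f).locallyIntegrable (by norm_num)).continuous_smul (by fun_prop)
  refine ae_eq_of_integral_contDiff_smul_eq (hloc _ _) (hloc _ _) fun φ hφ hφc => ?_
  let ψ : EuclideanSpace ℝ ι → ℂ := ofRealCLM ∘ φ
  have hψc : HasCompactSupport ψ := hφc.comp_left rfl
  have hpair {y : EuclideanSpace ℝ ι} (hy : y ∈ Ω) :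
      ∫ ξ, φ ξ • expTilt (-y) (fourierL2 (memLp_two_comp_tubePoint hΩo hF hFC hy)) ξ =
        ∫ x, fourierLaplace ψ (-tubePoint x y) * F (tubePoint x y) := by
    have htiltc : HasCompactSupport (expTilt (-y) ψ) := hψc.smul_left
    let Ψ := htiltc.toSchwartzMap ((by fun_prop : ContDiff ℝ ∞ fun ξ =>
      Real.exp (-(2 * π * innerSL ℝ (-y) ξ))).smul (by fun_prop : ContDiff ℝ ∞ ψ))
    calc _ = ∫ ξ, Ψ ξ • fourierL2 (memLp_two_comp_tubePoint hΩo hF hFC hy) ξ := by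
          refine integral_congr_ae (.of_forall fun ξ => ?_)
          change φ ξ • expTilt (-y) _ ξ = expTilt (-y) ψ ξ • _
          simp only [expTilt, real_smul, smul_eq_mul, Function.comp_apply, ofRealCLM_apply, ψ]
          ring
      _ = ∫ x, 𝓕 (expTilt (-y) ψ) x • F (tubePoint x y) := integral_smul_fourierL2 _ Ψ
      _ = _ := by simp only [fourierLaplace_neg_tubePoint, smul_eq_mul]
  rw [hpair hy, hpair hy']
  exact integral_mul_fourierLaplace_neg_tubePoint_eq hΩo hΩc hF hFC (by fun_prop) hψc hy hy'

theorem exists_isLaplaceDensity_eqOn_fourierLaplace (hΩo : IsOpen Ω) (hΩc : Convex ℝ Ω)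
    (hF : DifferentiableOn ℂ F (tube Ω)) (hFC : ∀ y ∈ Ω, ∫⁻ x, ‖F (tubePoint x y)‖ₑ ^ 2 ≤ C) :
    ∃ g, IsLaplaceDensity Ω g volume ∧ (∀ y ∈ Ω, ∫⁻ ξ, ‖expTilt y g ξ‖ₑ ^ 2 ≤ C) ∧
      EqOn F (fourierLaplace g) (tube Ω) := by
  rcases Ω.eq_empty_or_nonempty with rfl | ⟨y₀, hy₀⟩
  · exact ⟨0, fun y hy => hy.elim, fun y hy => hy.elim, fun z hz => hz.elim⟩
  have hF2 {y} (hy : y ∈ Ω) := memLp_two_comp_tubePoint hΩo hF hFC hy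
  let g := expTilt (-y₀) (fourierL2 (hF2 hy₀))
  have hg {y} (hy : y ∈ Ω) : fourierL2 (hF2 hy) =ᵐ[volume] expTilt y g := by
    filter_upwards [expTilt_neg_fourier_comp_tubePoint_ae_eq hΩo hΩc hF hFC hy hy₀] with ξ hξ
    have h : expTilt y (expTilt (-y) (fourierL2 (hF2 hy))) ξ = expTilt y g ξ :=
      congrArg (Real.exp (-(2 * π * ⟪y, ξ⟫)) • ·) hξ
    rwa [expTilt_expTilt, add_neg_cancel, expTilt_zero] at h
  have hgL : IsLaplaceDensity Ω g volume :=
    .of_memLp_two hΩo fun y hy => (Lp.memLp _).ae_eq (hg hy)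
  refine ⟨g, hgL, fun y hy => ?_, fun z hz => ?_⟩
  · calc ∫⁻ ξ, ‖expTilt y g ξ‖ₑ ^ 2 = ∫⁻ ξ, ‖fourierL2 (hF2 hy) ξ‖ₑ ^ 2 :=
          (lintegral_congr_ae ((hg hy).fun_comp (‖·‖ₑ ^ 2))).symm
      _ = ∫⁻ x, ‖F (tubePoint x y)‖ₑ ^ 2 := lintegral_enorm_sq_fourierL2 _
      _ ≤ C := hFC y hy
  · obtain ⟨x, hx⟩ := exists_tubePoint_imVec z
    rw [← hx, fourierLaplace_tubePoint]
    exact congrFun (eq_fourierInv_of_fourierL2_ae_eq (continuous_comp_tubePoint hΩo hF hz)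
      (hF2 hz) (hgL _ hz) (hg hz)) x

end PaleyWiener

section Cone

open Filter
open scoped RealInnerProductSpace Real Topology

theorem lintegral_le_of_tendsto_of_forall_le {α : Type*} [MeasurableSpace α] {μ : Measure α}
    {f : ℕ → α → ℝ≥0∞} {g : α → ℝ≥0∞} {C : ℝ≥0∞} (hf : ∀ n, AEMeasurable (f n) μ)
    (hfg : ∀ᵐ x ∂μ, Tendsto (f · x) atTop (𝓝 (g x))) (hC : ∀ n, ∫⁻ x, f n x ∂μ ≤ C) :
    ∫⁻ x, g x ∂μ ≤ C := calc
  ∫⁻ x, g x ∂μ = ∫⁻ x, liminf (f · x) atTop ∂μ :=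
    lintegral_congr_ae (hfg.mono fun _ hx => hx.liminf_eq.symm)
  _ ≤ liminf (fun n => ∫⁻ x, f n x ∂μ) atTop := lintegral_liminf_le' hf
  _ ≤ C := liminf_le_of_frequently_le' (.of_forall hC)

variable {V G : Type*} [NormedAddCommGroup V] [InnerProductSpace ℝ V] [NormedAddCommGroup G]
  [NormedSpace ℝ G]

theorem enorm_expTilt_sq (y : V) (k : V → G) (ξ : V) :
    ‖expTilt y k ξ‖ₑ ^ 2 = ENNReal.ofReal (Real.exp (-(4 * π * ⟪y, ξ⟫))) * ‖k ξ‖ₑ ^ 2 := by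
  rw [expTilt, enorm_smul, mul_pow, Real.enorm_of_nonneg (Real.exp_nonneg _),
    ← ENNReal.ofReal_pow (Real.exp_nonneg _), ← Real.exp_nat_mul]
  ring_nf

variable [MeasurableSpace V] [BorelSpace V] {μ : Measure V} {k : V → G} {y : V} {C : ℝ≥0∞}

-- As `c → ∞` the factor `exp (-4πc⟪y, ξ⟫)` blows up where `⟪y, ξ⟫ < 0`, so the uniform bound forces
-- `k = 0` there.
theorem ae_inner_neg_imp_eq_zero (hk : AEStronglyMeasurable k μ) (hC : C ≠ ⊤)
    (h : ∀ c : ℝ, 0 < c → ∫⁻ ξ, ‖expTilt (c • y) k ξ‖ₑ ^ 2 ∂μ ≤ C) :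
    ∀ᵐ ξ ∂μ, ⟪y, ξ⟫ < 0 → k ξ = 0 := by
  let S : Set V := {ξ | ⟪y, ξ⟫ < 0}
  have hS : MeasurableSet S := (isOpen_lt (by fun_prop) continuous_const).measurableSet
  have hblowup : ∀ ξ ∈ S, Tendsto (fun n : ℕ => ‖expTilt ((n + 1 : ℝ) • y) k ξ‖ₑ ^ 2) atTop
      (𝓝 (⊤ * ‖k ξ‖ₑ ^ 2)) := by
    intro ξ hξ
    simp only [enorm_expTilt_sq]
    refine ENNReal.Tendsto.mul_const (ENNReal.tendsto_ofReal_nhds_top.2 ?_)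
      (.inl ENNReal.top_ne_zero)
    refine Real.tendsto_exp_atTop.comp ?_
    have hlin : Tendsto (fun n : ℕ => (n + 1 : ℝ)) atTop atTop :=
      tendsto_atTop_add_const_right _ _ tendsto_natCast_atTop_atTop
    refine (hlin.atTop_mul_const (r := -(4 * π * ⟪y, ξ⟫)) ?_).congr fun n => ?_
    · have := mul_neg_of_pos_of_neg Real.pi_pos hξ
      linarith
    · rw [real_inner_smul_left]
      ring
  have hle : ∫⁻ ξ in S, ⊤ * ‖k ξ‖ₑ ^ 2 ∂μ ≤ C :=
    lintegral_le_of_tendsto_of_forall_le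
      (fun n => ((aestronglyMeasurable_expTilt_iff.2 hk).enorm.pow_const 2).restrict)
      ((ae_restrict_iff' hS).2 (.of_forall hblowup))
      fun n => (setLIntegral_le_lintegral _ _).trans (h _ (by positivity))
  have hfin := (ae_restrict_iff' hS).1 <| ae_lt_top'
    ((hk.enorm.pow_const 2).const_mul ⊤).restrict (hle.trans_lt hC.lt_top).ne
  filter_upwards [hfin] with ξ hξ hneg
  by_contra h0
  simpa [ENNReal.top_mul, h0] using hξ hneg

theorem lintegral_enorm_sq_le_of_expTilt (hk : AEStronglyMeasurable k μ)
    (h : ∀ c : ℝ, 0 < c → ∫⁻ ξ, ‖expTilt (c • y) k ξ‖ₑ ^ 2 ∂μ ≤ C) :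
    ∫⁻ ξ, ‖k ξ‖ₑ ^ 2 ∂μ ≤ C := by
  refine lintegral_le_of_tendsto_of_forall_le
    (f := fun n ξ => ‖expTilt ((1 / (n + 1 : ℝ)) • y) k ξ‖ₑ ^ 2)
    (fun n => (aestronglyMeasurable_expTilt_iff.2 hk).enorm.pow_const 2)
    (.of_forall fun ξ => ?_) fun n => h _ (by positivity)
  have hcont : Continuous fun c : ℝ => ‖expTilt (c • y) k ξ‖ₑ ^ 2 := by
    unfold expTilt
    fun_prop
  simpa [Function.comp_def] using (hcont.tendsto 0).comp tendsto_one_div_add_atTop_nhds_zero_nat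

theorem ae_notMem_innerDual_imp_eq_zero [CompleteSpace V] [TopologicalSpace.SeparableSpace V]
    {K : ConvexCone ℝ V} (hK : IsOpen (K : Set V)) (hk : AEStronglyMeasurable k μ) (hC : C ≠ ⊤)
    (h : ∀ y ∈ K, ∫⁻ ξ, ‖expTilt y k ξ‖ₑ ^ 2 ∂μ ≤ C) :
    ∀ᵐ ξ ∂μ, ξ ∉ ProperCone.innerDual (K : Set V) → k ξ = 0 := by
  obtain ⟨t, htc, htd⟩ := TopologicalSpace.exists_countable_dense V
  have hae : ∀ᵐ ξ ∂μ, ∀ y ∈ t ∩ K, ⟪y, ξ⟫ < 0 → k ξ = 0 :=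
    (ae_ball_iff (htc.mono inter_subset_left)).2 fun y hy =>
      ae_inner_neg_imp_eq_zero hk hC fun c hc => h _ (K.smul_mem hc hy.2)
  filter_upwards [hae] with ξ hξ hξK
  obtain ⟨y, hyK, hy⟩ : ∃ y ∈ K, ⟪y, ξ⟫ < 0 := by
    simpa [ProperCone.mem_innerDual] using hξK
  obtain ⟨y', ⟨hy'K, hy'⟩, hy't⟩ := htd.inter_open_nonempty
    ((K : Set V) ∩ {y | ⟪y, ξ⟫ < 0}) (hK.inter (isOpen_lt (by fun_prop) continuous_const))
    ⟨y, hyK, hy⟩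
  exact hξ y' ⟨hy't, hy'K⟩ hy'

theorem exists_fourierLaplace_eqOn_tube_cone {ι : Type*} [Fintype ι]
    {K : ConvexCone ℝ (EuclideanSpace ℝ ι)} (hK : IsOpen (K : Set (EuclideanSpace ℝ ι)))
    (hKne : (K : Set (EuclideanSpace ℝ ι)).Nonempty) {F : (ι → ℂ) → ℂ} {C : ℝ≥0}
    (hF : DifferentiableOn ℂ F (tube K)) (hFC : ∀ y ∈ K, ∫⁻ x, ‖F (tubePoint x y)‖ₑ ^ 2 ≤ C) :
    ∃ g, IsLaplaceDensity K g volume ∧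
      (∀ᵐ ξ, ξ ∉ ProperCone.innerDual (K : Set (EuclideanSpace ℝ ι)) → g ξ = 0) ∧
      ∫⁻ ξ, ‖g ξ‖ₑ ^ 2 ≤ C ∧ EqOn F (fourierLaplace g) (tube K) := by
  obtain ⟨g, hg, hgC, hFg⟩ := exists_isLaplaceDensity_eqOn_fourierLaplace hK K.convex hF hFC
  have hgm := hg.aestronglyMeasurable hKne
  exact ⟨g, hg, ae_notMem_innerDual_imp_eq_zero hK hgm ENNReal.coe_ne_top hgC,
    lintegral_enorm_sq_le_of_expTilt hgm fun c hc => hgC _ (K.smul_mem hc hKne.some_mem), hFg⟩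

end Cone

section FinSucc

open WithLp
open scoped Topology RealInnerProductSpace

variable {n : ℕ}

/-- The measurable splitting `ξ ↦ (ξ₀, (ξ₁, …, ξₙ))` of `ℝⁿ⁺¹` as `ℝ × ℝⁿ`. -/
def headTailEquiv (n : ℕ) :
    EuclideanSpace ℝ (Fin (n + 1)) ≃ᵐ ℝ × EuclideanSpace ℝ (Fin n) :=
  ((MeasurableEquiv.toLp 2 _).symm.trans (MeasurableEquiv.piFinSuccAbove (fun _ => ℝ) 0)).trans
    ((MeasurableEquiv.refl ℝ).prodCongr (MeasurableEquiv.toLp 2 _))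

theorem measurePreserving_headTailEquiv (n : ℕ) : MeasurePreserving (headTailEquiv n) :=
  ((MeasurePreserving.id volume).prod (PiLp.volume_preserving_toLp (Fin n))).comp
    ((volume_preserving_piFinSuccAbove (fun _ => ℝ) 0).comp (PiLp.volume_preserving_ofLp _))

/-- The spatial part `(ξ₁, …, ξₙ)` of `ξ = (ξ₀, …, ξₙ)`. -/
def tailVec : EuclideanSpace ℝ (Fin (n + 1)) →ₗ[ℝ] EuclideanSpace ℝ (Fin n) where
  toFun ξ := toLp 2 fun i => ξ i.succ
  map_add' _ _ := rfl
  map_smul' _ _ := rfl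

@[simp] theorem tailVec_apply (ξ : EuclideanSpace ℝ (Fin (n + 1))) (i : Fin n) :
    tailVec ξ i = ξ i.succ :=
  rfl

/-- The vector `(t, p₁, …, pₙ)`. -/
def consVec (t : ℝ) (p : EuclideanSpace ℝ (Fin n)) : EuclideanSpace ℝ (Fin (n + 1)) :=
  toLp 2 (Fin.cons t p)

@[simp] theorem tailVec_consVec (t : ℝ) (p : EuclideanSpace ℝ (Fin n)) :
    tailVec (consVec t p) = p :=
  rfl

@[simp] theorem consVec_zero (t : ℝ) (p : EuclideanSpace ℝ (Fin n)) : consVec t p 0 = t := rfl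

theorem headTailEquiv_symm_apply (q : ℝ × EuclideanSpace ℝ (Fin n)) :
    (headTailEquiv n).symm q = consVec q.1 q.2 := by
  rw [MeasurableEquiv.symm_apply_eq]
  rfl

theorem inner_eq_add_inner_tailVec (x y : EuclideanSpace ℝ (Fin (n + 1))) :
    ⟪x, y⟫ = x 0 * y 0 + ⟪tailVec x, tailVec y⟫ := by
  simp [PiLp.inner_apply, Fin.sum_univ_succ, mul_comm]

theorem continuous_tailVec : Continuous (tailVec (n := n)) :=
  LinearMap.continuous_of_finiteDimensional _

/-- The forward light cone `{y | |(y₁, …, yₙ)| < y₀}` of `ℝⁿ⁺¹`. -/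
def lightCone (n : ℕ) : ConvexCone ℝ (EuclideanSpace ℝ (Fin (n + 1))) where
  carrier := {y | ‖tailVec y‖ < y 0}
  smul_mem' c hc y hy := by
    simpa [norm_smul, abs_of_pos hc] using mul_lt_mul_of_pos_left hy hc
  add_mem' x hx y hy := by
    simpa using (norm_add_le _ _).trans_lt (add_lt_add hx hy)

theorem isOpen_lightCone : IsOpen (lightCone n : Set (EuclideanSpace ℝ (Fin (n + 1)))) :=
  isOpen_lt continuous_tailVec.norm (by fun_prop)

theorem consVec_mem_lightCone {t : ℝ} {p : EuclideanSpace ℝ (Fin n)} :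
    consVec t p ∈ lightCone n ↔ ‖p‖ < t :=
  Iff.rfl

theorem norm_tailVec_le_of_mem_innerDual_lightCone {ξ : EuclideanSpace ℝ (Fin (n + 1))}
    (hξ : ξ ∈ ProperCone.innerDual (lightCone n : Set (EuclideanSpace ℝ (Fin (n + 1))))) :
    ‖tailVec ξ‖ ≤ ξ 0 := by
  have hle {t : ℝ} (ht : ‖tailVec ξ‖ < t) : ‖tailVec ξ‖ ^ 2 ≤ t * ξ 0 := by
    simpa [inner_eq_add_inner_tailVec] using
      ProperCone.mem_innerDual.1 hξ (show consVec t (-tailVec ξ) ∈ lightCone n by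
        simpa [consVec_mem_lightCone] using ht)
  rcases eq_or_ne (tailVec ξ) 0 with h0 | h0
  · simpa [h0] using hle (t := 1) (by simp [h0])
  have htendsto : Filter.Tendsto (fun t => t * ξ 0) (𝓝[>] ‖tailVec ξ‖) (𝓝 (‖tailVec ξ‖ * ξ 0)) :=
    (Continuous.tendsto (by fun_prop) _).mono_left nhdsWithin_le_nhds
  refine le_of_mul_le_mul_left ?_ (norm_pos_iff.2 h0)
  rw [← sq]
  exact ge_of_tendsto htendsto (eventually_mem_nhdsWithin.mono fun _ => hle)

end FinSucc

section Box

open Complex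
open scoped Real

variable {F G : (Fin 3 → ℂ) → ℂ} {U : Set (Fin 3 → ℂ)} {k : EuclideanSpace ℝ (Fin 3) → ℂ}
  {D : Set (EuclideanSpace ℝ (Fin 3))}

theorem pd_eqOn_of_eqOn (hU : IsOpen U) (h : EqOn F G U) (i : Fin 3) :
    EqOn (pd i F) (pd i G) U := fun z hz => by
  rw [pd, pd, (h.eventuallyEq_of_mem (hU.mem_nhds hz)).fderiv_eq]

theorem Box_eqOn_of_eqOn (hU : IsOpen U) (h : EqOn F G U) : EqOn (Box F) (Box G) U := fun z hz => by
  have hpd i := pd_eqOn_of_eqOn hU (pd_eqOn_of_eqOn hU h i) i hz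
  rw [Box, Box, hpd, hpd, hpd]

namespace IsLaplaceDensity

theorem coord_mul {ι : Type*} [Fintype ι] {D : Set (EuclideanSpace ℝ ι)}
    {k : EuclideanSpace ℝ ι → ℂ} (hD : IsOpen D) (hk : IsLaplaceDensity D k volume) (i : ι) :
    IsLaplaceDensity D (fun ξ => (2 * π * I * ξ i) * k ξ) volume := by
  refine hk.smul_of_norm_le_pow hD (p := fun ξ => 2 * π * I * ξ i) (A := 2 * π) (n := 1)
    (by fun_prop) fun ξ => ?_
  rw [pow_one]
  simpa [abs_of_pos Real.pi_pos] using
    mul_le_mul_of_nonneg_left (PiLp.norm_apply_le ξ i) Real.two_pi_pos.le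

theorem pd_fourierLaplace (hD : IsOpen D) (hk : IsLaplaceDensity D k volume) (i : Fin 3) :
    EqOn (pd i (fourierLaplace k)) (fourierLaplace fun ξ => (2 * π * I * ξ i) * k ξ) (tube D) :=
  fun z hz => by
    rw [pd, hk.fderiv_fourierLaplace_apply hD hz]
    simp [pairing_apply, Pi.single_apply]

theorem pd_pd_fourierLaplace (hD : IsOpen D) (hk : IsLaplaceDensity D k volume) (i : Fin 3) :
    EqOn (pd i (pd i (fourierLaplace k)))
      (fourierLaplace fun ξ => (2 * π * I * ξ i) * ((2 * π * I * ξ i) * k ξ)) (tube D) :=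
  (pd_eqOn_of_eqOn (isOpen_tube hD) (hk.pd_fourierLaplace hD i) i).trans
    ((hk.coord_mul hD i).pd_fourierLaplace hD i)

end IsLaplaceDensity

/-- The Fourier multiplier of `□`, for the convention `e^(2πi ξ·z)` of `fourierLaplace`. -/
def boxSymbol (ξ : EuclideanSpace ℝ (Fin 3)) : ℝ :=
  4 * π ^ 2 * DeltaL ξ

theorem abs_DeltaL_le (ξ : EuclideanSpace ℝ (Fin 3)) : |DeltaL ξ| ≤ ‖ξ‖ ^ 2 := by
  rw [EuclideanSpace.real_norm_sq_eq, Fin.sum_univ_three, DeltaL, abs_le]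
  constructor <;> nlinarith [sq_nonneg (ξ 0), sq_nonneg (ξ 1), sq_nonneg (ξ 2)]

theorem IsLaplaceDensity.boxSymbol_pow_smul (hD : IsOpen D) (hk : IsLaplaceDensity D k volume)
    (m : ℕ) : IsLaplaceDensity D (fun ξ => boxSymbol ξ ^ m • k ξ) volume := by
  refine hk.smul_of_norm_le_pow hD (A := (4 * π ^ 2) ^ m) (n := 2 * m)
    (by unfold boxSymbol DeltaL; fun_prop) fun ξ => ?_
  rw [norm_pow, Real.norm_eq_abs, boxSymbol, abs_mul, abs_of_pos (by positivity), mul_pow, pow_mul]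
  gcongr
  exact abs_DeltaL_le ξ

theorem IsLaplaceDensity.Box_fourierLaplace (hD : IsOpen D) (hk : IsLaplaceDensity D k volume) :
    EqOn (Box (fourierLaplace k)) (fourierLaplace fun ξ => boxSymbol ξ • k ξ) (tube D) := by
  intro z hz
  have hint i := ((hk.coord_mul hD i).coord_mul hD i).integrable_cexp_pairing_mul hz
  rw [Box, hk.pd_pd_fourierLaplace hD 0 hz, hk.pd_pd_fourierLaplace hD 1 hz,
    hk.pd_pd_fourierLaplace hD 2 hz]
  simp only [fourierLaplace]
  rw [← integral_neg', ← integral_add' (hint 0).neg (hint 1),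
    ← integral_add' ((hint 0).neg.add (hint 1)) (hint 2)]
  refine integral_congr_ae (.of_forall fun ξ => ?_)
  simp only [Pi.add_apply, Pi.neg_apply, boxSymbol, DeltaL, real_smul]
  push_cast
  linear_combination (-(4 * π ^ 2 * cexp (2 * π * I * pairing ξ z) * k ξ *
    ((ξ 0 : ℂ) ^ 2 - ξ 1 ^ 2 - ξ 2 ^ 2))) * I_sq

theorem IsLaplaceDensity.Box_iterate_eqOn_fourierLaplace (hD : IsOpen D)
    (hk : IsLaplaceDensity D k volume) (hF : EqOn F (fourierLaplace k) (tube D)) (m : ℕ) :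
    EqOn (Box^[m] F) (fourierLaplace fun ξ => boxSymbol ξ ^ m • k ξ) (tube D) := by
  induction m with
  | zero => simpa using hF
  | succ m ih =>
    rw [Function.iterate_succ_apply']
    refine (Box_eqOn_of_eqOn (isOpen_tube hD) ih).trans ?_
    simpa only [smul_smul, ← pow_succ'] using
      (hk.boxSymbol_pow_smul hD m).Box_fourierLaplace hD

end Box

section LorentzCone

open WithLp

theorem DeltaL_eq_sq_sub_norm_tailVec_sq (ξ : EuclideanSpace ℝ (Fin 3)) :
    DeltaL ξ = ξ 0 ^ 2 - ‖tailVec ξ‖ ^ 2 := by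
  rw [EuclideanSpace.real_norm_sq_eq, Fin.sum_univ_two, DeltaL]
  simp [sub_sub]

theorem toLp_mem_lightCone_iff {y : Fin 3 → ℝ} : toLp 2 y ∈ lightCone 2 ↔ y ∈ Lambda3 := by
  have hΔ : DeltaL y = y 0 ^ 2 - ‖tailVec (toLp 2 y)‖ ^ 2 :=
    DeltaL_eq_sq_sub_norm_tailVec_sq (toLp 2 y)
  refine ⟨fun (h : ‖tailVec (toLp 2 y)‖ < y 0) => ⟨?_, ?_⟩, fun ⟨hpos, (hdet : 0 < DeltaL y)⟩ => ?_⟩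
  · have := neg_le_of_abs_le (PiLp.norm_apply_le (tailVec (toLp 2 y)) 0)
    simp only [tailVec_apply, Fin.succ_zero_eq_one] at this
    linarith
  · exact (sub_pos.2 (pow_lt_pow_left₀ h (norm_nonneg _) two_ne_zero)).trans_eq hΔ.symm
  · have hy : 0 < (y 0 + y 1) * (y 0 - y 1) := by
      rw [DeltaL] at hdet
      nlinarith [sq_nonneg (y 2)]
    have hy0 : 0 ≤ y 0 := by linarith [pos_of_mul_pos_right hy hpos.le]
    exact lt_of_pow_lt_pow_left₀ 2 hy0 (sub_pos.1 (hΔ ▸ hdet))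

theorem tube_lightCone : tube (lightCone 2 : Set (EuclideanSpace ℝ (Fin 3))) = TLambda3 :=
  ext fun _ => toLp_mem_lightCone_iff

theorem lintegral_tubePoint_le_hardyNormSq (F : (Fin 3 → ℂ) → ℂ) {y : EuclideanSpace ℝ (Fin 3)}
    (hy : y ∈ lightCone 2) :
    ∫⁻ x : EuclideanSpace ℝ (Fin 3), ‖F (tubePoint x y)‖ₑ ^ 2 ≤ hardyNormSq F := by
  have hslice : ∫⁻ x : EuclideanSpace ℝ (Fin 3), ‖F (tubePoint x y)‖ₑ ^ 2 =
      ∫⁻ x : Fin 3 → ℝ, ‖F (fun i => (x i : ℂ) + (y i : ℂ) * Complex.I)‖ₑ ^ 2 :=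
    (PiLp.volume_preserving_ofLp (Fin 3)).lintegral_comp_emb
      (MeasurableEquiv.toLp 2 (Fin 3 → ℝ)).symm.measurableEmbedding
      fun x => ‖F (fun i => (x i : ℂ) + (y i : ℂ) * Complex.I)‖ₑ ^ 2
  rw [hslice]
  exact le_iSup₂ (f := fun (y : Fin 3 → ℝ) (_ : y ∈ Lambda3) =>
    ∫⁻ x : Fin 3 → ℝ, ‖F (fun i => (x i : ℂ) + (y i : ℂ) * Complex.I)‖ₑ ^ 2) y.ofLp
    (toLp_mem_lightCone_iff.1 hy)

end LorentzCone

section FourierSlice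

open Complex
open scoped Real RealInnerProductSpace FourierTransform

variable {n : ℕ} {G : Type*} [NormedAddCommGroup G] {f : EuclideanSpace ℝ (Fin (n + 1)) → G}

theorem measurePreserving_consVec :
    MeasurePreserving fun q : ℝ × EuclideanSpace ℝ (Fin n) => consVec q.1 q.2 :=
  funext (headTailEquiv_symm_apply (n := n)) ▸ (measurePreserving_headTailEquiv n).symm

theorem measurableEmbedding_consVec :
    MeasurableEmbedding fun q : ℝ × EuclideanSpace ℝ (Fin n) => consVec q.1 q.2 :=
  funext (headTailEquiv_symm_apply (n := n)) ▸ (headTailEquiv n).symm.measurableEmbedding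

theorem integrable_comp_consVec (hf : Integrable f) :
    Integrable fun q : ℝ × EuclideanSpace ℝ (Fin n) => f (consVec q.1 q.2) :=
  measurePreserving_consVec.integrable_comp_of_integrable hf

theorem ae_ae_consVec {p : EuclideanSpace ℝ (Fin (n + 1)) → Prop} (h : ∀ᵐ ξ, p ξ) :
    ∀ᵐ t : ℝ, ∀ᵐ q : EuclideanSpace ℝ (Fin n), p (consVec t q) :=
  Measure.ae_ae_of_ae_prod (measurePreserving_consVec.quasiMeasurePreserving.ae h)

theorem lintegral_lintegral_consVec {f : EuclideanSpace ℝ (Fin (n + 1)) → ℝ≥0∞}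
    (hf : AEMeasurable f) : ∫⁻ t : ℝ, ∫⁻ p, f (consVec t p) = ∫⁻ ξ, f ξ := by
  rw [← measurePreserving_consVec.lintegral_comp_emb measurableEmbedding_consVec]
  exact (lintegral_prod _
    (hf.comp_quasiMeasurePreserving measurePreserving_consVec.quasiMeasurePreserving)).symm

variable [NormedSpace ℝ G]

/-- The marginal `t ↦ ∫ f(t, p₁, …, pₙ) dp` of `f` along the first coordinate axis. -/
def marginal (f : EuclideanSpace ℝ (Fin (n + 1)) → G) (t : ℝ) : G :=
  ∫ p, f (consVec t p)

theorem marginal_fun_smul {𝕜 : Type*} [NormedField 𝕜] [NormedSpace 𝕜 G] [SMulCommClass ℝ 𝕜 G]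
    (c : ℝ → 𝕜) (t : ℝ) :
    marginal (fun ξ => c (ξ 0) • f ξ) t = c t • marginal f t :=
  integral_smul (c t) _

theorem integrable_marginal (hf : Integrable f) : Integrable (marginal f) :=
  (integrable_comp_consVec hf).integral_prod_left

theorem integral_marginal (hf : Integrable f) : ∫ t, marginal f t = ∫ ξ, f ξ := by
  rw [← measurePreserving_consVec.integral_comp measurableEmbedding_consVec]
  exact (integral_prod _ (integrable_comp_consVec hf)).symm

theorem ae_marginal_eq_zero (hf : ∀ᵐ ξ, ξ 0 < ‖tailVec ξ‖ → f ξ = 0) :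
    ∀ᵐ t, t < 0 → marginal f t = 0 :=
  (ae_ae_consVec hf).mono fun _ ht hneg =>
    integral_eq_zero_of_ae (ht.mono fun p hp => hp (hneg.trans_le (norm_nonneg p)))

theorem marginal_expTilt_consVec_zero (y : ℝ) :
    marginal (expTilt (consVec y 0) f) = expTilt y (marginal f) := by
  funext t
  simp [expTilt, marginal, inner_eq_add_inner_tailVec, integral_smul, mul_comm]

theorem isLaplaceDensity_marginal {D : Set (EuclideanSpace ℝ (Fin (n + 1)))}
    (hf : IsLaplaceDensity D f volume) :
    IsLaplaceDensity {y : ℝ | consVec y 0 ∈ D} (marginal f) volume := fun y hy =>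
  marginal_expTilt_consVec_zero (f := f) y ▸ integrable_marginal (hf _ hy)

theorem fourierInv_consVec_zero {G : Type*} [NormedAddCommGroup G] [NormedSpace ℂ G]
    {f : EuclideanSpace ℝ (Fin (n + 1)) → G} (hf : Integrable f) (x : ℝ) :
    𝓕⁻ f (consVec x 0) = 𝓕⁻ (marginal f) x := by
  have hint : Integrable fun ξ => cexp (↑(2 * π * ⟪ξ 0, x⟫) * I) • f ξ :=
    hf.bdd_smul 1 (by fun_prop) (.of_forall fun ξ => (norm_exp_ofReal_mul_I _).le)
  have hinner (ξ : EuclideanSpace ℝ (Fin (n + 1))) : ⟪ξ, consVec x 0⟫ = ⟪ξ 0, x⟫ := by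
    simp [inner_eq_add_inner_tailVec, mul_comm]
  rw [Real.fourierInv_eq', Real.fourierInv_eq']
  simp only [hinner]
  rw [← integral_marginal hint]
  simp only [marginal_fun_smul fun t => cexp (↑(2 * π * ⟪t, x⟫) * I)]

theorem IsLaplaceDensity.fourierLaplace_consVec_zero {D : Set (EuclideanSpace ℝ (Fin (n + 1)))}
    {k : EuclideanSpace ℝ (Fin (n + 1)) → ℂ} (hk : IsLaplaceDensity D k volume) (x : ℝ) {y : ℝ}
    (hy : consVec y 0 ∈ D) :
    fourierLaplace k (tubePoint (consVec x 0) (consVec y 0)) =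
      𝓕⁻ (expTilt y (marginal k)) x := by
  rw [fourierLaplace_tubePoint, fourierInv_consVec_zero (hk _ hy), marginal_expTilt_consVec_zero]

end FourierSlice

section Bergman

open Complex
open scoped Real FourierTransform

theorem lintegral_rpow_mul_exp_neg_mul_Ioi {a r : ℝ} (ha : -1 < a) (hr : 0 < r) :
    ∫⁻ y in Ioi (0 : ℝ), ENNReal.ofReal (y ^ a * Real.exp (-(r * y))) =
      ENNReal.ofReal (Real.Gamma (a + 1) / r ^ (a + 1)) := by
  have hint := Real.integral_rpow_mul_exp_neg_mul_Ioi (a := a + 1) (by linarith) hr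
  have hΓ : 0 < Real.Gamma (a + 1) := Real.Gamma_pos_of_pos (by linarith)
  rw [add_sub_cancel_right, Real.div_rpow zero_le_one hr.le, Real.one_rpow, one_div_mul_eq_div]
    at hint
  rw [← hint, ofReal_integral_eq_lintegral_ofReal]
  · exact Integrable.of_integral_ne_zero (hint ▸ (by positivity))
  · filter_upwards [self_mem_ae_restrict measurableSet_Ioi] with y hy
    exact mul_nonneg (Real.rpow_nonneg (le_of_lt hy) _) (Real.exp_nonneg _)

-- An inequality, and not an equality, since `f` need not be measurable.
theorem bergNormSqUHP_le_lintegral_lintegral (α : ℝ) (f : ℂ → ℂ) :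
    bergNormSqUHP α f ≤
      ∫⁻ y in Ioi (0 : ℝ), ENNReal.ofReal (y ^ α) * ∫⁻ x : ℝ, ‖f ⟨x, y⟩‖ₑ ^ 2 := by
  have hUHP : MeasurableSet UHP := measurableSet_lt measurable_const measurable_im
  calc bergNormSqUHP α f
      ≤ ∫⁻ z in UHP, ENNReal.ofReal (z.im ^ α) * ‖f z‖ₑ ^ 2 := by
        rw [bergNormSqUHP, Vm]
        exact lintegral_withDensity_le_lintegral_mul _ (by fun_prop) _
    _ = ∫⁻ p : ℝ × ℝ,
          UHP.indicator (fun z => ENNReal.ofReal (z.im ^ α) * ‖f z‖ₑ ^ 2) ⟨p.2, p.1⟩ := by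
        rw [← lintegral_indicator hUHP, ← volume_preserving_equiv_real_prod.symm.lintegral_comp_emb
          measurableEquivRealProd.symm.measurableEmbedding, Measure.volume_eq_prod,
          ← lintegral_prod_swap]
        rfl
    _ ≤ ∫⁻ y : ℝ, ∫⁻ x : ℝ,
          UHP.indicator (fun z => ENNReal.ofReal (z.im ^ α) * ‖f z‖ₑ ^ 2) ⟨x, y⟩ :=
        lintegral_prod_le _
    _ = ∫⁻ y in Ioi (0 : ℝ), ENNReal.ofReal (y ^ α) * ∫⁻ x : ℝ, ‖f ⟨x, y⟩‖ₑ ^ 2 := by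
        rw [← lintegral_indicator measurableSet_Ioi]
        refine lintegral_congr fun y => ?_
        by_cases hy : 0 < y
        · simp [indicator, UHP, hy, lintegral_const_mul']
        · simp [indicator, UHP, hy]

theorem lintegral_enorm_sq_fourierInv_expTilt_le {h : ℝ → ℂ} {y : ℝ}
    (hh : Integrable (expTilt y h)) (hsupp : ∀ᵐ t, t < 0 → h t = 0) :
    ∫⁻ x, ‖𝓕⁻ (expTilt y h) x‖ₑ ^ 2 ≤
      ∫⁻ t in Ioi 0, ENNReal.ofReal (Real.exp (-(4 * π * t * y))) * ‖h t‖ₑ ^ 2 := by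
  refine (lintegral_enorm_sq_fourierInv_le hh).trans_eq ?_
  rw [← lintegral_indicator measurableSet_Ioi]
  refine lintegral_congr_ae ?_
  filter_upwards [hsupp, Measure.ae_ne volume 0] with t ht ht0
  rw [enorm_expTilt_sq]
  rcases ht0.lt_or_gt with hneg | hpos
  · simp [ht hneg, hneg.le]
  · simp [hpos, mul_assoc]

theorem IsLaplaceDensity.bergNormSqUHP_le {α : ℝ} (hα : -1 < α) {f : ℂ → ℂ} {h : ℝ → ℂ}
    (hh : IsLaplaceDensity (Ioi 0) h volume) (hsupp : ∀ᵐ t, t < 0 → h t = 0)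
    (hf : ∀ x y : ℝ, 0 < y → f ⟨x, y⟩ = 𝓕⁻ (expTilt y h) x) :
    bergNormSqUHP α f ≤
      ∫⁻ t in Ioi 0, ENNReal.ofReal (Real.Gamma (α + 1) / (4 * π * t) ^ (α + 1)) * ‖h t‖ₑ ^ 2 := by
  have hmeas : AEMeasurable (fun t => ‖h t‖ₑ ^ 2) :=
    (aestronglyMeasurable_expTilt_iff.1 (hh 1 (mem_Ioi.2 one_pos)).1).enorm.pow_const 2
  calc bergNormSqUHP α f
      ≤ ∫⁻ y in Ioi (0 : ℝ), ENNReal.ofReal (y ^ α) * ∫⁻ x : ℝ, ‖f ⟨x, y⟩‖ₑ ^ 2 :=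
        bergNormSqUHP_le_lintegral_lintegral α f
    _ ≤ ∫⁻ y in Ioi (0 : ℝ), ∫⁻ t in Ioi (0 : ℝ),
          ENNReal.ofReal (y ^ α * Real.exp (-(4 * π * t * y))) * ‖h t‖ₑ ^ 2 := by
        refine setLIntegral_mono' measurableSet_Ioi fun y hy => ?_
        simp only [hf _ y hy, ENNReal.ofReal_mul (Real.rpow_nonneg (le_of_lt hy) α), mul_assoc]
        rw [lintegral_const_mul' _ _ ENNReal.ofReal_ne_top]
        gcongr ENNReal.ofReal (y ^ α) * ?_
        simpa only [mul_assoc] using lintegral_enorm_sq_fourierInv_expTilt_le (hh y hy) hsupp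
    _ = ∫⁻ t in Ioi (0 : ℝ), ∫⁻ y in Ioi (0 : ℝ),
          ENNReal.ofReal (y ^ α * Real.exp (-(4 * π * t * y))) * ‖h t‖ₑ ^ 2 := by
        have hweight : Measurable fun q : ℝ × ℝ =>
            ENNReal.ofReal (q.1 ^ α * Real.exp (-(4 * π * q.2 * q.1))) := by fun_prop
        exact lintegral_lintegral_swap (hweight.aemeasurable.mul hmeas.restrict.comp_snd)
    _ = ∫⁻ t in Ioi 0,
          ENNReal.ofReal (Real.Gamma (α + 1) / (4 * π * t) ^ (α + 1)) * ‖h t‖ₑ ^ 2 := by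
        refine setLIntegral_congr_fun measurableSet_Ioi fun t (ht : 0 < t) => ?_
        rw [lintegral_mul_const _ (by fun_prop),
          lintegral_rpow_mul_exp_neg_mul_Ioi hα (by positivity)]

end Bergman

section AxisEstimate

open scoped Real

theorem sq_lintegral_mul_le {α : Type*} [MeasurableSpace α] {μ : Measure α} {f g : α → ℝ≥0∞}
    (hf : AEMeasurable f μ) (hg : AEMeasurable g μ) :
    (∫⁻ a, f a * g a ∂μ) ^ 2 ≤ (∫⁻ a, f a ^ 2 ∂μ) * ∫⁻ a, g a ^ 2 ∂μ := by
  have hroot (c : ℝ≥0∞) : (c ^ (1 / 2 : ℝ)) ^ 2 = c := by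
    rw [← ENNReal.rpow_natCast, ← ENNReal.rpow_mul]
    norm_num
  calc (∫⁻ a, f a * g a ∂μ) ^ 2
      ≤ ((∫⁻ a, f a ^ (2 : ℝ) ∂μ) ^ (1 / 2 : ℝ) * (∫⁻ a, g a ^ (2 : ℝ) ∂μ) ^ (1 / 2 : ℝ)) ^ 2 := by
        gcongr
        exact ENNReal.lintegral_mul_le_Lp_mul_Lq μ .two_two hf hg
    _ = (∫⁻ a, f a ^ 2 ∂μ) * ∫⁻ a, g a ^ 2 ∂μ := by
        simp only [mul_pow, hroot, ENNReal.rpow_two]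

theorem enorm_integral_smul_sq_le {α 𝕜 G : Type*} [MeasurableSpace α] {μ : Measure α}
    [NormedField 𝕜] [NormedAddCommGroup G] [NormedSpace ℝ G] [NormedSpace 𝕜 G]
    {φ : α → 𝕜} {f : α → G} {s : Set α} (hφ : AEStronglyMeasurable φ μ)
    (hf : AEStronglyMeasurable f μ) (hfs : ∀ᵐ x ∂μ, x ∉ s → f x = 0) :
    ‖∫ x, φ x • f x ∂μ‖ₑ ^ 2 ≤ (∫⁻ x in s, ‖φ x‖ₑ ^ 2 ∂μ) * ∫⁻ x, ‖f x‖ₑ ^ 2 ∂μ := by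
  have hset : ∫ x in s, φ x • f x ∂μ = ∫ x, φ x • f x ∂μ :=
    setIntegral_eq_integral_of_ae_compl_eq_zero <| hfs.mono fun x hx hxs => by simp [hx hxs]
  calc ‖∫ x, φ x • f x ∂μ‖ₑ ^ 2
      ≤ (∫⁻ x in s, ‖φ x‖ₑ * ‖f x‖ₑ ∂μ) ^ 2 := by
        rw [← hset]
        gcongr
        simpa only [enorm_smul] using
          enorm_integral_le_lintegral_enorm (μ := μ.restrict s) fun x => φ x • f x
    _ ≤ (∫⁻ x in s, ‖φ x‖ₑ ^ 2 ∂μ) * ∫⁻ x in s, ‖f x‖ₑ ^ 2 ∂μ :=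
        sq_lintegral_mul_le hφ.enorm.restrict hf.enorm.restrict
    _ ≤ (∫⁻ x in s, ‖φ x‖ₑ ^ 2 ∂μ) * ∫⁻ x, ‖f x‖ₑ ^ 2 ∂μ := by
        gcongr
        exact Measure.restrict_le_self

theorem integral_mul_sub_sq_pow (t : ℝ) (N : ℕ) :
    ∫ r in (0 : ℝ)..t, r * (t ^ 2 - r ^ 2) ^ N = t ^ (2 * N + 2) / (2 * (N + 1)) := by
  have hderiv (r : ℝ) : HasDerivAt (fun r => -(t ^ 2 - r ^ 2) ^ (N + 1) / (2 * (N + 1)))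
      (r * (t ^ 2 - r ^ 2) ^ N) r := by
    convert! ((((hasDerivAt_pow 2 r).const_sub (t ^ 2)).pow (N + 1)).neg).div_const
      (2 * ((N : ℝ) + 1)) using 1
    push_cast
    field_simp
  rw [intervalIntegral.integral_eq_sub_of_hasDerivAt (fun r _ => hderiv r)
    (Continuous.intervalIntegrable (by fun_prop) _ _), sub_self, zero_pow N.succ_ne_zero]
  ring

theorem lintegral_closedBall_sub_norm_sq_pow {t : ℝ} (ht : 0 ≤ t) (N : ℕ) :
    ∫⁻ p in Metric.closedBall (0 : EuclideanSpace ℝ (Fin 2)) t,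
      ENNReal.ofReal ((t ^ 2 - ‖p‖ ^ 2) ^ N) = ENNReal.ofReal (π * t ^ (2 * N + 2) / (N + 1)) := by
  have hball : MeasurableSet (Metric.closedBall (0 : EuclideanSpace ℝ (Fin 2)) t) :=
    Metric.isClosed_closedBall.measurableSet
  rw [← ofReal_integral_eq_lintegral_ofReal]
  · congr 1
    calc ∫ p in Metric.closedBall (0 : EuclideanSpace ℝ (Fin 2)) t, (t ^ 2 - ‖p‖ ^ 2) ^ N
        = ∫ p : EuclideanSpace ℝ (Fin 2), (Iic t).indicator (fun r => (t ^ 2 - r ^ 2) ^ N) ‖p‖ := by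
          rw [← integral_indicator hball]
          simp [indicator]
      _ = 2 * π * ∫ r in Ioi (0 : ℝ), (Iic t).indicator (fun r => r * (t ^ 2 - r ^ 2) ^ N) r := by
          rw [integral_fun_norm_addHaar]
          simp [Measure.real, indicator, mul_assoc, Real.pi_nonneg]
      _ = 2 * π * ∫ r in (0 : ℝ)..t, r * (t ^ 2 - r ^ 2) ^ N := by
          rw [setIntegral_indicator measurableSet_Iic, Ioi_inter_Iic,
            intervalIntegral.integral_of_le ht]
      _ = π * t ^ (2 * N + 2) / (N + 1) := by
          rw [integral_mul_sub_sq_pow]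
          field_simp
  · exact (Continuous.continuousOn (by fun_prop)).integrableOn_compact
      (isCompact_closedBall 0 t)
  · filter_upwards [self_mem_ae_restrict hball] with p hp
    rw [mem_closedBall_zero_iff] at hp
    exact pow_nonneg (sub_nonneg.2 (by gcongr)) _

variable {g : EuclideanSpace ℝ (Fin 3) → ℂ}

theorem lintegral_enorm_boxSymbol_pow_sq {t : ℝ} (ht : 0 ≤ t) (m : ℕ) :
    ∫⁻ p in Metric.closedBall 0 t, ‖boxSymbol (consVec t p) ^ m‖ₑ ^ 2 =
      ENNReal.ofReal ((4 * π ^ 2) ^ (2 * m) * (π * t ^ (4 * m + 2) / (2 * m + 1))) := by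
  have hsymbol (p : EuclideanSpace ℝ (Fin 2)) : ‖boxSymbol (consVec t p) ^ m‖ₑ ^ 2 =
      ENNReal.ofReal ((4 * π ^ 2) ^ (2 * m)) *
        ENNReal.ofReal ((t ^ 2 - ‖p‖ ^ 2) ^ (2 * m)) := by
    rw [← ENNReal.ofReal_mul (by positivity), Real.enorm_eq_ofReal_abs,
      ← ENNReal.ofReal_pow (abs_nonneg _), sq_abs, ← pow_mul, mul_comm m, boxSymbol, mul_pow,
      DeltaL_eq_sq_sub_norm_tailVec_sq, consVec_zero, tailVec_consVec]
  simp only [hsymbol]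
  rw [lintegral_const_mul' _ _ ENNReal.ofReal_ne_top, lintegral_closedBall_sub_norm_sq_pow ht,
    ← ENNReal.ofReal_mul (by positivity)]
  push_cast
  ring_nf

theorem enorm_marginal_boxSymbol_pow_smul_sq_le {t : ℝ} (ht : 0 ≤ t) (m : ℕ)
    (hg : AEStronglyMeasurable fun p => g (consVec t p))
    (hsupp : ∀ᵐ p, t < ‖p‖ → g (consVec t p) = 0) :
    ‖marginal (fun ξ => boxSymbol ξ ^ m • g ξ) t‖ₑ ^ 2 ≤
      ENNReal.ofReal ((4 * π ^ 2) ^ (2 * m) * (π * t ^ (4 * m + 2) / (2 * m + 1))) *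
        ∫⁻ p, ‖g (consVec t p)‖ₑ ^ 2 := by
  rw [← lintegral_enorm_boxSymbol_pow_sq ht]
  refine enorm_integral_smul_sq_le (Continuous.aestronglyMeasurable ?_) hg ?_
  · simp only [boxSymbol, DeltaL_eq_sq_sub_norm_tailVec_sq, consVec_zero, tailVec_consVec]
    fun_prop
  · simpa using hsupp

end AxisEstimate

section Restriction

open scoped Real

variable {g : EuclideanSpace ℝ (Fin 3) → ℂ}

theorem gamma_mul_disc_integral_eq (m : ℕ) {t : ℝ} (ht : 0 < t) :
    Real.Gamma ((4 * m + 1 : ℝ) + 1) / (4 * π * t) ^ ((4 * m + 1 : ℝ) + 1) *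
        ((4 * π ^ 2) ^ (2 * m) * (π * t ^ (4 * m + 2) / (2 * m + 1))) =
      Real.Gamma (4 * m + 2) / (2 ^ (4 * m + 4) * π * (2 * m + 1)) := by
  have hexp : (4 * m + 1 : ℝ) + 1 = ((4 * m + 2 : ℕ) : ℝ) := by push_cast; ring
  have hfour (j : ℕ) : (4 : ℝ) ^ j = 2 ^ (2 * j) := by rw [pow_mul]; norm_num
  rw [hexp, Real.rpow_natCast]
  push_cast
  simp only [mul_pow, hfour, ← pow_mul]
  field_simp
  ring

theorem lintegral_marginal_boxSymbol_pow_smul_le (hg : AEStronglyMeasurable g)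
    (hsupp : ∀ᵐ ξ, ξ 0 < ‖tailVec ξ‖ → g ξ = 0) (m : ℕ) :
    ∫⁻ t in Ioi 0,
        ENNReal.ofReal (Real.Gamma ((4 * m + 1 : ℝ) + 1) / (4 * π * t) ^ ((4 * m + 1 : ℝ) + 1)) *
          ‖marginal (fun ξ => boxSymbol ξ ^ m • g ξ) t‖ₑ ^ 2 ≤
      ENNReal.ofReal (Real.Gamma (4 * m + 2) / (2 ^ (4 * m + 4) * π * (2 * m + 1))) *
        ∫⁻ ξ, ‖g ξ‖ₑ ^ 2 := by
  rw [← lintegral_lintegral_consVec (hg.enorm.pow_const 2),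
    ← lintegral_const_mul' _ _ ENNReal.ofReal_ne_top]
  refine (lintegral_mono_ae ?_).trans (setLIntegral_le_lintegral (Ioi 0) _)
  have hmeas : ∀ᵐ t : ℝ,
      AEStronglyMeasurable fun p : EuclideanSpace ℝ (Fin 2) => g (consVec t p) :=
    (hg.comp_measurePreserving measurePreserving_consVec).prodMk_left
  filter_upwards [ae_restrict_of_ae hmeas, ae_restrict_of_ae (ae_ae_consVec hsupp),
    self_mem_ae_restrict measurableSet_Ioi] with t htmeas htsupp (ht : 0 < t)
  rw [← gamma_mul_disc_integral_eq m ht, ENNReal.ofReal_mul (by positivity),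
    mul_assoc (ENNReal.ofReal _)]
  gcongr ENNReal.ofReal _ * ?_
  exact enorm_marginal_boxSymbol_pow_smul_sq_le ht.le m htmeas htsupp

theorem axis_eq_tubePoint (x y : ℝ) :
    ![(⟨x, y⟩ : ℂ), 0, 0] = tubePoint (consVec x 0) (consVec y (0 : EuclideanSpace ℝ (Fin 2))) := by
  funext i
  cases i using Fin.cases with
  | zero => simp [tubePoint, consVec, Complex.mk_eq_add_mul_I]
  | succ i =>
    trans 0
    · fin_cases i <;> rfl
    · simp [tubePoint, consVec]

theorem differentiable_axis : Differentiable ℂ fun z : ℂ => ![z, 0, 0] :=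
  differentiable_pi.2 fun i => by fin_cases i <;> simp

theorem consVec_zero_mem_lightCone {y : ℝ} {n : ℕ} :
    consVec y (0 : EuclideanSpace ℝ (Fin n)) ∈ lightCone n ↔ 0 < y := by
  rw [consVec_mem_lightCone, norm_zero]

theorem nonempty_lightCone (n : ℕ) :
    (lightCone n : Set (EuclideanSpace ℝ (Fin (n + 1)))).Nonempty :=
  ⟨consVec 1 0, consVec_zero_mem_lightCone.2 one_pos⟩

theorem axis_mem_tube_lightCone {z : ℂ} (hz : z ∈ UHP) :
    ![z, 0, 0] ∈ tube (lightCone 2 : Set (EuclideanSpace ℝ (Fin 3))) := by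
  rw [← Complex.eta z, axis_eq_tubePoint]
  exact tubePoint_mem_tube.2 (consVec_zero_mem_lightCone.2 hz)

theorem IsLaplaceDensity.bergNormSqUHP_axis_le {k : EuclideanSpace ℝ (Fin 3) → ℂ} {α : ℝ}
    (hα : -1 < α) (hk : IsLaplaceDensity (lightCone 2 : Set (EuclideanSpace ℝ (Fin 3))) k volume)
    (hsupp : ∀ᵐ ξ, ξ 0 < ‖tailVec ξ‖ → k ξ = 0) {f : (Fin 3 → ℂ) → ℂ}
    (hf : EqOn f (fourierLaplace k) (tube (lightCone 2 : Set (EuclideanSpace ℝ (Fin 3))))) :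
    bergNormSqUHP α (fun z => f ![z, 0, 0]) ≤
      ∫⁻ t in Ioi 0, ENNReal.ofReal (Real.Gamma (α + 1) / (4 * π * t) ^ (α + 1)) *
        ‖marginal k t‖ₑ ^ 2 := by
  have hmarginal : IsLaplaceDensity (Ioi 0) (marginal k) volume := fun y hy =>
    isLaplaceDensity_marginal hk y (consVec_zero_mem_lightCone.2 hy)
  refine hmarginal.bergNormSqUHP_le hα (ae_marginal_eq_zero hsupp) fun x y hy => ?_
  rw [hf (axis_mem_tube_lightCone hy), axis_eq_tubePoint,
    hk.fourierLaplace_consVec_zero x (consVec_zero_mem_lightCone.2 hy)]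

theorem exists_fourierLaplace_eqOn_of_hardyNormSq_lt_top {F : (Fin 3 → ℂ) → ℂ}
    (hF : DifferentiableOn ℂ F TLambda3) (hM : hardyNormSq F < ⊤) :
    ∃ g : EuclideanSpace ℝ (Fin 3) → ℂ,
      IsLaplaceDensity (lightCone 2 : Set (EuclideanSpace ℝ (Fin 3))) g volume ∧
      (∀ᵐ ξ, ξ 0 < ‖tailVec ξ‖ → g ξ = 0) ∧ ∫⁻ ξ, ‖g ξ‖ₑ ^ 2 ≤ hardyNormSq F ∧
      EqOn F (fourierLaplace g) (tube (lightCone 2 : Set (EuclideanSpace ℝ (Fin 3)))) := by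
  obtain ⟨g, hg, hsupp, hgF, hFg⟩ := exists_fourierLaplace_eqOn_tube_cone (K := lightCone 2)
    (C := (hardyNormSq F).toNNReal) isOpen_lightCone
    (nonempty_lightCone 2) (tube_lightCone ▸ hF) fun y hy =>
      (lintegral_tubePoint_le_hardyNormSq F hy).trans_eq (ENNReal.coe_toNNReal hM.ne).symm
  refine ⟨g, hg, hsupp.mono fun ξ hξ hlt => hξ fun hdual => ?_,
    hgF.trans_eq (ENNReal.coe_toNNReal hM.ne), hFg⟩
  exact hlt.not_ge (norm_tailVec_le_of_mem_innerDual_lightCone hdual)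

end Restriction

/-- with `C_m = Γ(4m+2)/(2^{4m+4} π (2m+1))`, the restriction
`z₁ ↦ (□^m F)(z₁,0,0)` of `□^m F` to `Π⁺` belongs to `A²_{4m+1}(Π⁺)` with
`‖R□^m F‖²_{A²_{4m+1}} ≤ C_m ‖F‖²_{H²(T_{Λ₃})}` for every `F ∈ H²(T_{Λ₃})`. -/
theorem restriction_bounded_into_bergman (m : ℕ) :
    ∀ F : (Fin 3 → ℂ) → ℂ, DifferentiableOn ℂ F TLambda3 → hardyNormSq F < ⊤ →
      DifferentiableOn ℂ (fun z₁ : ℂ => Box^[m] F ![z₁, 0, 0]) UHP ∧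
      bergNormSqUHP (4 * m + 1) (fun z₁ : ℂ => Box^[m] F ![z₁, 0, 0]) ≤
        ENNReal.ofReal
            (Real.Gamma (4 * m + 2) / (2 ^ (4 * m + 4) * Real.pi * (2 * m + 1)))
          * hardyNormSq F := by
  intro F hF hM
  obtain ⟨g, hg, hsupp, hgF, hFg⟩ := exists_fourierLaplace_eqOn_of_hardyNormSq_lt_top hF hM
  have hk := hg.boxSymbol_pow_smul isOpen_lightCone m
  have hbox := hg.Box_iterate_eqOn_fourierLaplace isOpen_lightCone hFg m
  constructor
  · exact ((hk.differentiableOn_fourierLaplace isOpen_lightCone).congr hbox).comp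
      differentiable_axis.differentiableOn fun z hz => axis_mem_tube_lightCone hz
  · have hksupp := hsupp.mono fun ξ hξ hlt => smul_eq_zero_of_right (boxSymbol ξ ^ m) (hξ hlt)
    refine (hk.bergNormSqUHP_axis_le (by linarith [m.cast_nonneg (α := ℝ)]) hksupp hbox).trans ?_
    have hgm := hg.aestronglyMeasurable (nonempty_lightCone 2)
    refine (lintegral_marginal_boxSymbol_pow_smul_le hgm hsupp m).trans ?_
    gcongr
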